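/- Let P and Q be disjoint sets of prime numbers with P infinite. Then there exists an invertible bimeasurable measure-preserving transformation R of a standard atomless probability space (X, μ) such that: (i) R has rank one, i.e. for every ε > 0 and every finite family A₁, …, A_k of measurable sets there exist a measurable set B and an integer h ≥ 1 such that B, R B, …, R^{h−1} B are pairwise disjoint and each A_j differs by a set of measure less than ε from a union of some of the sets R^i B (0 ≤ i < h); (ii) R is weakly mixing, i.e. there is a sequence (m_i) of integers such that for all f, g ∈ L²(X, μ), ∫ f · (g ∘ R^{m_i}) dμ → (∫ f dμ)(∫ g dμ); and (iii) for every n ∈ Q there exists an invertible bimeasurable measure-preserving transformation Ψ of (X, μ) with Ψ ∘ R = R^[n] ∘ Ψ almost everywhere, so that R is conjugate to each power R^n with n ∈ Q. -/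

import Mathlib

namespace RankOneProof
open Finset

section SinglePrime
open Classical

/-- Counting function. -/
noncomputable def cnt {α : Type*} [Fintype α] (s : α → Prop) : ℕ := (univ.filter s).card

lemma cnt_eq {α : Type*} [Fintype α] (s : α → Prop) [DecidablePred s] :
    cnt s = (univ.filter s).card := by
  unfold cnt; congr

lemma cnt_mono {α : Type*} [Fintype α] {s t : α → Prop} (h : ∀ x, s x → t x) :
    cnt s ≤ cnt t := by
  unfold cnt
  refine Finset.card_le_card ?_
  intro x hx
  simp only [mem_filter, mem_univ, true_and] at hx ⊢
  exact h x hx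

lemma cnt_or_le {α : Type*} [Fintype α] (s t : α → Prop) :
    cnt (fun x => s x ∨ t x) ≤ cnt s + cnt t := by
  rw [cnt_eq, cnt_eq, cnt_eq, Finset.filter_or]
  exact Finset.card_union_le _ _

lemma cnt_exists_le {α ι : Type*} [Fintype α] (I : Finset ι) (s : ι → α → Prop) (B : ℕ)
    (hB : ∀ i ∈ I, cnt (s i) ≤ B) : cnt (fun x => ∃ i ∈ I, s i x) ≤ I.card * B := by
  have hsub : (univ.filter (fun x => ∃ i ∈ I, s i x)) ⊆ I.biUnion (fun i => univ.filter (s i)) := by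
    intro x hx
    simpa using hx
  rw [cnt_eq]
  simp only [cnt_eq] at hB
  refine (Finset.card_le_card hsub).trans (Finset.card_biUnion_le.trans ?_)
  exact (Finset.sum_le_card_nsmul _ _ B hB).trans (by rw [smul_eq_mul])

/-- Counting is invariant under bijections. -/
lemma cnt_equiv {α β : Type*} [Fintype α] [Fintype β] (e : α ≃ β) (s : β → Prop) :
    cnt (fun x => s (e x)) = cnt s := by
  unfold cnt
  refine Finset.card_equiv e ?_
  intro i; simp

/-- The slowly varying block function on `ZMod p`. -/
noncomputable def xi (p h a J : ℕ) (y : ZMod p) : ZMod h :=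
  if a ≤ y.val ∧ y.val < a + h * J then (((y.val - a) / J : ℕ) : ZMod h) else 0

/-- The dilated sum of block functions. -/
noncomputable def cc (p h a J D : ℕ) (x : ZMod p) : ZMod h :=
  ∑ w ∈ D.divisors, ((D / w : ℕ) : ZMod h) * xi p h a J ((w : ZMod p) * x)

variable {p h a J D : ℕ}

lemma xi_eq_zero {y : ZMod p} (hy : ¬ (a ≤ y.val ∧ y.val < a + h * J)) : xi p h a J y = 0 := by
  simp [xi, hy]

lemma card_S_le [NeZero p] :
    cnt (fun y : ZMod p => a ≤ y.val ∧ y.val < a + h * J) ≤ h * J := by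
  rw [cnt_eq]
  have : (univ.filter (fun y : ZMod p => a ≤ y.val ∧ y.val < a + h * J)).card
      ≤ (Finset.Ico a (a + h * J)).card := by
    refine Finset.card_le_card_of_injOn (fun y => y.val) ?_ ?_
    · intro y hy; simpa using hy
    · intro y _ z _ hyz; exact ZMod.val_injective p hyz
  simpa using this

lemma card_xi_eq [NeZero p] [NeZero h] (hJ : 0 < J) (hab : a + h * J ≤ p) (v : ZMod h) :
    J ≤ cnt (fun y : ZMod p => (a ≤ y.val ∧ y.val < a + h * J) ∧
      xi p h a J y = v) := by
  rw [cnt_eq]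
  have hv : v.val < h := ZMod.val_lt v
  have hb : ∀ j < J, a + (v.val * J + j) < a + h * J := by
    intro j hj
    have : (v.val + 1) * J ≤ h * J := Nat.mul_le_mul_right _ hv
    nlinarith
  have : (Finset.range J).card ≤ (univ.filter (fun y : ZMod p =>
      (a ≤ y.val ∧ y.val < a + h * J) ∧ xi p h a J y = v)).card := by
    refine Finset.card_le_card_of_injOn (fun j => ((a + (v.val * J + j) : ℕ) : ZMod p)) ?_ ?_
    · intro j hj
      have hj' : j < J := by simpa using hj
      have hval : ((a + (v.val * J + j) : ℕ) : ZMod p).val = a + (v.val * J + j) :=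
        ZMod.val_cast_of_lt (lt_of_lt_of_le (hb j hj') hab)
      have h1 : (a ≤ ((a + (v.val * J + j) : ℕ) : ZMod p).val ∧
          ((a + (v.val * J + j) : ℕ) : ZMod p).val < a + h * J) := by
        rw [hval]; exact ⟨by omega, hb j hj'⟩
      simp only [coe_filter, mem_univ, true_and, Set.mem_ofPred_eq]
      refine ⟨h1, ?_⟩
      unfold xi
      rw [if_pos h1, hval]
      have : (a + (v.val * J + j) - a) / J = v.val := by
        rw [Nat.add_sub_cancel_left, Nat.add_comm, Nat.add_mul_div_right _ _ hJ,
          Nat.div_eq_of_lt hj', zero_add]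
      rw [this, ZMod.natCast_zmod_val]
    · intro j hj k hk hjk
      have hj' : j < J := by simpa using hj
      have hk' : k < J := by simpa using hk
      have := congrArg ZMod.val hjk
      simp only [] at this
      rw [ZMod.val_cast_of_lt (lt_of_lt_of_le (hb j hj') hab),
        ZMod.val_cast_of_lt (lt_of_lt_of_le (hb k hk') hab)] at this
      omega
  simpa using this

lemma xi_succ [NeZero p] (hJ : 0 < J) (y : ZMod p)
    (h1 : y.val + 1 ≠ p) (h2 : ∀ i ≤ h, y.val + 1 ≠ a + i * J) :
    xi p h a J (y + 1) = xi p h a J y := by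
  have hlt : y.val < p := ZMod.val_lt y
  have hp : 1 < p := by omega
  have : Fact (1 < p) := ⟨hp⟩
  have hv : (y + 1).val = y.val + 1 := by
    rw [ZMod.val_add_of_lt, ZMod.val_one]
    rw [ZMod.val_one]; omega
  unfold xi
  rw [hv]
  have h20 := h2 0 (Nat.zero_le _)
  have h2h := h2 h le_rfl
  rw [zero_mul, add_zero] at h20
  by_cases hc : a ≤ y.val ∧ y.val < a + h * J
  · have hc' : a ≤ y.val + 1 ∧ y.val + 1 < a + h * J := by omega
    rw [if_pos hc, if_pos hc']
    congr 1
    have e1 : y.val + 1 - a = (y.val - a) + 1 := by omega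
    rw [e1, Nat.succ_div]
    have : ¬ J ∣ (y.val - a) + 1 := by
      rintro ⟨i, hi⟩
      by_cases hih : i ≤ h
      · apply h2 i hih
        rw [mul_comm]; omega
      · have : (h + 1) * J ≤ i * J := Nat.mul_le_mul_right _ (by omega)
        rw [mul_comm J i] at hi
        have : (h+1) * J = h * J + J := by ring
        omega
    simp [this]
  · have hc' : ¬ (a ≤ y.val + 1 ∧ y.val + 1 < a + h * J) := by omega
    rw [if_neg hc, if_neg hc']

lemma card_xi_succ [NeZero p] (hJ : 0 < J) (ha : 0 < a) :
    cnt (fun y : ZMod p => xi p h a J (y + 1) ≠ xi p h a J y) ≤ h + 2 := by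
  rw [cnt_eq]
  have : (univ.filter (fun y : ZMod p => xi p h a J (y + 1) ≠ xi p h a J y)).card
      ≤ (insert (p - 1) ((Finset.range (h + 1)).image (fun i => a + i * J - 1))).card := by
    refine Finset.card_le_card_of_injOn (fun y => y.val) ?_ ?_
    · intro y hy
      simp only [coe_filter, mem_univ, true_and, Set.mem_ofPred_eq] at hy
      by_contra hcon
      apply hy
      simp only [coe_insert, coe_image, coe_range, Set.mem_insert_iff, Set.mem_image,
        Set.mem_Iio, not_or, not_exists, not_and] at hcon
      apply xi_succ hJ
      · intro h1; apply hcon.1; omega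
      · intro i hi h1
        apply hcon.2 i (by omega)
        omega
    · intro y _ z _ hyz; exact ZMod.val_injective p hyz
  refine this.trans ((Finset.card_insert_le _ _).trans ?_)
  have := Finset.card_image_le (s := Finset.range (h + 1)) (f := fun i => a + i * J - 1)
  simp at this
  omega

lemma card_xi_add [NeZero p] (hJ : 0 < J) (ha : 0 < a) (w : ℕ) :
    cnt (fun y : ZMod p => xi p h a J (y + w) ≠ xi p h a J y) ≤ w * (h + 2) := by
  induction w with
  | zero => simp [cnt]
  | succ w ih =>
    have hsub : cnt (fun y : ZMod p => xi p h a J (y + (w + 1 : ℕ)) ≠ xi p h a J y) ≤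
        cnt (fun y : ZMod p => xi p h a J (y + w) ≠ xi p h a J y ∨
          xi p h a J ((y + w) + 1) ≠ xi p h a J (y + w)) := by
      apply cnt_mono
      intro y hy
      by_contra hcon
      push Not at hcon
      apply hy
      rw [← hcon.1, ← hcon.2]
      push_cast
      rw [add_assoc]
    have h2 := cnt_equiv (Equiv.addRight (w : ZMod p))
      (fun y : ZMod p => xi p h a J (y + 1) ≠ xi p h a J y)
    simp only [Equiv.coe_addRight] at h2
    have h3 := card_xi_succ (p := p) (h := h) (a := a) hJ ha
    have := hsub.trans (cnt_or_le _ _)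
    rw [h2] at this
    nlinarith

/-- multiplication by a unit as an equivalence -/
lemma exists_mul_equiv [NeZero p] {w : ℕ} (hw : Nat.Coprime w p) :
    ∃ e : ZMod p ≃ ZMod p, ∀ x, e x = (w : ZMod p) * x :=
  ⟨(ZMod.unitOfCoprime w hw).mulLeft, fun x => by simp [Units.mulLeft]⟩

lemma cnt_mul [NeZero p] {w : ℕ} (hw : Nat.Coprime w p) (s : ZMod p → Prop) :
    cnt (fun x : ZMod p => s ((w : ZMod p) * x)) = cnt s := by
  obtain ⟨e, he⟩ := exists_mul_equiv hw
  rw [← cnt_equiv e s]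
  simp only [he]

lemma cop_of_dvd {w : ℕ} (hD : Nat.Coprime D p) (hw : w ∈ D.divisors) : Nat.Coprime w p :=
  Nat.Coprime.coprime_dvd_left (Nat.dvd_of_mem_divisors hw) hD

lemma card_cc_succ [NeZero p] (hJ : 0 < J) (ha : 0 < a) (hD : Nat.Coprime D p) :
    cnt (fun x : ZMod p => cc p h a J D (x + 1) ≠ cc p h a J D x) ≤ D * (D * (h + 2)) := by
  have hsub : cnt (fun x : ZMod p => cc p h a J D (x + 1) ≠ cc p h a J D x) ≤
      cnt (fun x : ZMod p => ∃ w ∈ D.divisors,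
        xi p h a J ((w : ZMod p) * x + w) ≠ xi p h a J ((w : ZMod p) * x)) := by
    apply cnt_mono
    intro x hx
    by_contra hcon
    push Not at hcon
    apply hx
    unfold cc
    refine Finset.sum_congr rfl fun w hw => ?_
    rw [← hcon w hw, mul_add, mul_one]
  refine hsub.trans ((cnt_exists_le _ _ (D * (h + 2)) ?_).trans ?_)
  · intro w hw
    rw [cnt_mul (cop_of_dvd hD hw) (fun y => xi p h a J (y + w) ≠ xi p h a J y)]
    exact (card_xi_add hJ ha w).trans (Nat.mul_le_mul_right _ (Nat.divisor_le hw))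
  · exact Nat.mul_le_mul_right _ (Nat.card_divisors_le_self D)

lemma card_filter_xi_ne [NeZero p] {w : ℕ} (hw : Nat.Coprime w p) :
    cnt (fun x : ZMod p => xi p h a J ((w : ZMod p) * x) ≠ 0) ≤ h * J := by
  rw [cnt_mul hw (fun y => xi p h a J y ≠ 0)]
  refine le_trans (cnt_mono ?_) (card_S_le (p := p) (a := a) (h := h) (J := J))
  intro y hy
  by_contra hc
  exact hy (xi_eq_zero hc)

lemma card_cc_mul [NeZero p] (hD0 : D ≠ 0) (hD : Nat.Coprime D p) {q : ℕ} (hq0 : 0 < q)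
    (hq : Nat.Coprime q p) :
    cnt (fun x : ZMod p => cc p h a J D (q * x) ≠ q * cc p h a J D x)
      ≤ ((D.divisors.filter (fun w => ¬ q * w ∣ D)).card
        + (D.divisors.filter (fun w => ¬ q ∣ w)).card) * (h * J) := by
  have hsub : cnt (fun x : ZMod p => cc p h a J D (q * x) ≠ q * cc p h a J D x) ≤
      cnt (fun x : ZMod p => (∃ w ∈ D.divisors.filter (fun w => ¬ q * w ∣ D),
        xi p h a J (((q * w : ℕ) : ZMod p) * x) ≠ 0) ∨
        (∃ w ∈ D.divisors.filter (fun w => ¬ q ∣ w), xi p h a J ((w : ZMod p) * x) ≠ 0)) := by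
    apply cnt_mono
    intro x hx
    by_contra hcon
    push Not at hcon
    apply hx
    obtain ⟨h1, h2⟩ := hcon
    unfold cc
    rw [Finset.mul_sum]
    rw [← Finset.sum_filter_add_sum_filter_not D.divisors (fun w => q * w ∣ D),
      ← Finset.sum_filter_add_sum_filter_not D.divisors (fun w => q ∣ w)
        (fun w => (q : ZMod h) * (((D / w : ℕ) : ZMod h) * xi p h a J ((w : ZMod p) * x)))]
    congr 1
    · refine Finset.sum_bij (fun w _ => q * w) ?_ ?_ ?_ ?_
      · intro w hw
        simp only [mem_filter, Nat.mem_divisors] at hw ⊢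
        exact ⟨⟨hw.2, hD0⟩, dvd_mul_right _ _⟩
      · intro w _ w' _ hww
        exact Nat.eq_of_mul_eq_mul_left hq0 hww
      · intro w hw
        simp only [mem_filter, Nat.mem_divisors] at hw
        obtain ⟨⟨hwD, _⟩, ⟨v, rfl⟩⟩ := hw
        refine ⟨v, ?_, rfl⟩
        simp only [mem_filter, Nat.mem_divisors]
        exact ⟨⟨(dvd_mul_left _ _).trans hwD, hD0⟩, hwD⟩
      · intro w hw
        simp only [mem_filter, Nat.mem_divisors] at hw
        have e1 : D / w = q * (D / (q * w)) := by
          obtain ⟨k, hk⟩ := hw.2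
          have hw0 : 0 < w := Nat.pos_of_dvd_of_pos hw.1.1 (Nat.pos_of_ne_zero hD0)
          have hqw0 : 0 < q * w := Nat.mul_pos hq0 hw0
          rw [hk, Nat.mul_div_cancel_left _ hqw0]
          rw [show q * w * k = w * (q * k) by ring, Nat.mul_div_cancel_left _ hw0]
        rw [e1]
        push_cast
        rw [mul_assoc]
        congr 3
        ring
    · rw [Finset.sum_eq_zero, Finset.sum_eq_zero]
      · intro w hw
        rw [h2 w hw]; simp
      · intro w hw
        have := h1 w hw
        push_cast at this
        rw [show (w : ZMod p) * ((q : ZMod p) * x) = (q : ZMod p) * w * x by ring, this, mul_zero]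
  refine hsub.trans ((cnt_or_le _ _).trans ?_)
  rw [add_mul]
  refine Nat.add_le_add (cnt_exists_le _ _ _ ?_) (cnt_exists_le _ _ _ ?_)
  · intro w hw
    exact card_filter_xi_ne (Nat.Coprime.mul_left hq (cop_of_dvd hD (mem_filter.1 hw).1))
  · intro w hw
    exact card_filter_xi_ne (cop_of_dvd hD (mem_filter.1 hw).1)

end SinglePrime
end RankOneProof

namespace RankOneProof
open Finset

section SinglePrime2
open Classical
variable {p h a J D : ℕ}

/-- The support block. -/
def inS (p h a J : ℕ) (y : ZMod p) : Prop := a ≤ y.val ∧ y.val < a + h * J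

/-- The union of the dilated support blocks. -/
def inT (p h a J D : ℕ) (x : ZMod p) : Prop := ∃ w ∈ D.divisors, inS p h a J ((w : ZMod p) * x)

lemma inS_unique_aux [NeZero p] (hh : 0 < h) (hJ : 0 < J) (ha : a = D * (h * J))
    (hp : D * (a + h * J) ≤ p) {x : ZMod p} {w w' : ℕ} (hw : w ∈ D.divisors)
    (hw' : w' ∈ D.divisors) (h1 : inS p h a J ((w : ZMod p) * x))
    (h2 : inS p h a J ((w' : ZMod p) * x)) : ¬ w < w' := by
  intro hlt
  unfold inS at h1 h2
  set s := ((w : ZMod p) * x).val with hs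
  set s' := ((w' : ZMod p) * x).val with hs'
  have hwD := Nat.divisor_le hw
  have hwD' := Nat.divisor_le hw'
  have hwpos : 0 < w := Nat.pos_of_mem_divisors hw
  have hDpos : 0 < D := lt_of_lt_of_le hwpos hwD
  have hcong : ((w' * s : ℕ) : ZMod p) = ((w * s' : ℕ) : ZMod p) := by
    push_cast
    rw [hs, hs', ZMod.natCast_zmod_val, ZMod.natCast_zmod_val]
    ring
  have hb1 : w' * s < p := by
    calc w' * s ≤ D * s := Nat.mul_le_mul_right _ hwD'
      _ < D * (a + h * J) := Nat.mul_lt_mul_of_pos_left h1.2 hDpos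
      _ ≤ p := hp
  have hb2 : w * s' < p := by
    calc w * s' ≤ D * s' := Nat.mul_le_mul_right _ hwD
      _ < D * (a + h * J) := Nat.mul_lt_mul_of_pos_left h2.2 hDpos
      _ ≤ p := hp
  have heq : w' * s = w * s' := by
    have := congrArg ZMod.val hcong
    rwa [ZMod.val_cast_of_lt hb1, ZMod.val_cast_of_lt hb2] at this
  have c1 : (w + 1) * a ≤ w' * s := Nat.mul_le_mul hlt h1.1
  have c2 : w * s' < w * (a + h * J) := Nat.mul_lt_mul_of_pos_left h2.2 hwpos
  have c3 : w * (h * J) ≤ a := by rw [ha]; exact Nat.mul_le_mul_right _ hwD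
  nlinarith

lemma inS_unique [NeZero p] (hh : 0 < h) (hJ : 0 < J) (ha : a = D * (h * J))
    (hp : D * (a + h * J) ≤ p) {x : ZMod p} {w w' : ℕ} (hw : w ∈ D.divisors)
    (hw' : w' ∈ D.divisors) (h1 : inS p h a J ((w : ZMod p) * x))
    (h2 : inS p h a J ((w' : ZMod p) * x)) : w = w' := by
  have := inS_unique_aux hh hJ ha hp hw hw' h1 h2
  have := inS_unique_aux hh hJ ha hp hw' hw h2 h1
  omega

lemma cc_eq_zero {x : ZMod p} (hx : ¬ inT p h a J D x) : cc p h a J D x = 0 := by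
  unfold cc
  refine Finset.sum_eq_zero fun w hw => ?_
  rw [xi_eq_zero, mul_zero]
  intro hc
  exact hx ⟨w, hw, hc⟩

lemma cnt_inT_le [NeZero p] (hD : Nat.Coprime D p) :
    cnt (inT p h a J D) ≤ D.divisors.card * (h * J) := by
  refine cnt_exists_le _ _ _ ?_
  intro w hw
  rw [cnt_mul (cop_of_dvd hD hw) (inS p h a J)]
  exact card_S_le

lemma cnt_cc_eq [NeZero p] [NeZero h] (hJ : 0 < J) (ha : a = D * (h * J))
    (hp : D * (a + h * J) ≤ p) (hD : Nat.Coprime D p) (hDh : Nat.Coprime D h) (hD0 : 0 < D)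
    (u : ZMod h) :
    D.divisors.card * J ≤ cnt (fun x : ZMod p => inT p h a J D x ∧ cc p h a J D x = u) := by
  have hh : 0 < h := Nat.pos_of_ne_zero (NeZero.ne h)
  have hab : a + h * J ≤ p := le_trans (Nat.le_mul_of_pos_left _ hD0) hp
  let A : ℕ → Finset (ZMod p) := fun w => univ.filter (fun x : ZMod p =>
    inS p h a J ((w : ZMod p) * x) ∧ ((D / w : ℕ) : ZMod h) * xi p h a J ((w : ZMod p) * x) = u)
  have hA : ∀ w ∈ D.divisors, J ≤ (A w).card := by
    intro w hw
    have hu : Nat.Coprime (D / w) h :=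
      Nat.Coprime.coprime_dvd_left (Nat.div_dvd_of_dvd (Nat.dvd_of_mem_divisors hw)) hDh
    have hunit : IsUnit (((D / w : ℕ) : ZMod h)) := (ZMod.isUnit_iff_coprime _ _).2 hu
    obtain ⟨v, hv⟩ : ∃ v : ZMod h, ((D / w : ℕ) : ZMod h) * v = u := by
      refine ⟨((D / w : ℕ) : ZMod h)⁻¹ * u, ?_⟩
      rw [← mul_assoc, ZMod.mul_inv_of_unit _ hunit, one_mul]
    have h1 := card_xi_eq (p := p) hJ hab v
    have h2 := cnt_mul (p := p) (cop_of_dvd hD hw) (fun y : ZMod p =>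
      (a ≤ y.val ∧ y.val < a + h * J) ∧ xi p h a J y = v)
    rw [← h2, cnt_eq] at h1
    refine h1.trans (Finset.card_le_card ?_)
    intro x hx
    simp only [A, mem_filter, mem_univ, true_and] at hx ⊢
    exact ⟨hx.1, by rw [hx.2, hv]⟩
  have hsub : D.divisors.biUnion A ⊆
      univ.filter (fun x : ZMod p => inT p h a J D x ∧ cc p h a J D x = u) := by
    intro x hx
    simp only [A, mem_biUnion, mem_filter, mem_univ, true_and] at hx ⊢
    obtain ⟨w, hw, hS, hxu⟩ := hx
    refine ⟨⟨w, hw, hS⟩, ?_⟩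
    rw [← hxu]
    unfold cc
    refine Finset.sum_eq_single_of_mem w hw ?_
    intro w' hw' hne
    rw [xi_eq_zero, mul_zero]
    intro hc
    exact hne (inS_unique hh hJ ha hp hw' hw hc hS)
  rw [cnt_eq]
  refine le_trans ?_ (Finset.card_le_card hsub)
  rw [Finset.card_biUnion]
  · exact (by rw [smul_eq_mul] : D.divisors.card * J = D.divisors.card • J).le.trans
      (Finset.card_nsmul_le_sum _ _ _ hA)
  · intro w hw w' hw' hne
    rw [Function.onFun, Finset.disjoint_left]
    intro x hx hx'
    simp only [A, mem_filter, mem_univ, true_and] at hx hx'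
    exact hne (inS_unique hh hJ ha hp hw hw' hx.1 hx'.1)

lemma exists_shift [NeZero p] (T : ZMod p → Prop) :
    ∃ m : ZMod p, cnt (fun x => T x ∧ T (x + m)) * p ≤ cnt T * cnt T := by
  have hsum : ∑ m : ZMod p, cnt (fun x => T x ∧ T (x + m)) = cnt T * cnt T := by
    simp only [cnt_eq, Finset.card_filter]
    rw [Finset.sum_comm, Finset.sum_mul]
    refine Finset.sum_congr rfl fun x _ => ?_
    by_cases hx : T x
    · simp only [hx, true_and, if_true, one_mul]
      exact Fintype.sum_equiv (Equiv.addLeft x) _ _ (fun m => by simp only [Equiv.coe_addLeft]; congr)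
    · simp [hx]
  by_contra hcon
  push Not at hcon
  have : ∑ m : ZMod p, cnt T * cnt T < ∑ m : ZMod p, cnt (fun x => T x ∧ T (x + m)) * p :=
    Finset.sum_lt_sum_of_nonempty univ_nonempty (fun m _ => hcon m)
  have e := Finset.sum_mul univ (fun m : ZMod p => cnt (fun x => T x ∧ T (x + m))) p
  rw [hsum] at e
  rw [← e] at this
  simp [ZMod.card] at this
  rw [mul_comm] at this
  exact lt_irrefl _ this

lemma exists_mix [NeZero p] [NeZero h] (hJ : 0 < J) (ha : a = D * (h * J))
    (hp : D * (a + h * J) ≤ p) (hD : Nat.Coprime D p) (hDh : Nat.Coprime D h) (hD0 : 0 < D)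
    (hp2 : 2 * D.divisors.card * (h * h) * J ≤ p) :
    ∃ m : ZMod p, ∀ u : ZMod h,
      D.divisors.card * J ≤ 2 * cnt (fun x => cc p h a J D (x + m) - cc p h a J D x = u) := by
  obtain ⟨m, hm⟩ := exists_shift (inT p h a J D)
  refine ⟨m, fun u => ?_⟩
  have h1 := cnt_cc_eq hJ ha hp hD hDh hD0 u
  have h2 := cnt_equiv (Equiv.addRight m) (fun x : ZMod p => inT p h a J D x ∧ cc p h a J D x = u)
  simp only [Equiv.coe_addRight] at h2
  have h3 : cnt (fun x : ZMod p => inT p h a J D (x + m) ∧ cc p h a J D (x + m) = u) ≤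
      cnt (fun x => inT p h a J D x ∧ inT p h a J D (x + m)) +
      cnt (fun x => cc p h a J D (x + m) - cc p h a J D x = u) := by
    refine le_trans (cnt_mono ?_) (cnt_or_le _ _)
    intro x hx
    by_cases hxT : inT p h a J D x
    · exact Or.inl ⟨hxT, hx.1⟩
    · right; rw [cc_eq_zero hxT, sub_zero]; exact hx.2
  have h4 := cnt_inT_le (p := p) (h := h) (a := a) (J := J) hD
  have h5 : cnt (fun x => inT p h a J D x ∧ inT p h a J D (x + m)) * p ≤
     (D.divisors.card * (h * J)) * (D.divisors.card * (h * J)) :=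
    hm.trans (Nat.mul_le_mul h4 h4)
  set V := D.divisors.card
  set c := cnt (fun x => inT p h a J D x ∧ inT p h a J D (x + m))
  have hppos : 0 < p := Nat.pos_of_ne_zero (NeZero.ne p)
  have h6 : 2 * c ≤ V * J := by
    refine Nat.le_of_mul_le_mul_right (?_ : 2 * c * p ≤ V * J * p) hppos
    calc 2 * c * p = 2 * (c * p) := by ring
      _ ≤ 2 * ((V * (h * J)) * (V * (h * J))) := Nat.mul_le_mul_left _ h5
      _ = V * J * (2 * V * (h * h) * J) := by ring
      _ ≤ V * J * p := Nat.mul_le_mul_left _ hp2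
  omega

lemma card_not_dvd {q L D' : ℕ} (hq : q.Prime) :
    (L + 1) * ((q ^ L * D').divisors.filter (fun w => ¬ q ∣ w)).card
      ≤ (q ^ L * D').divisors.card := by
  rw [mul_comm (L + 1), ← Finset.card_range (L + 1), ← Finset.card_product]
  refine Finset.card_le_card_of_injOn (fun z => q ^ z.2 * z.1) ?_ ?_
  · rintro ⟨w, i⟩ hz
    simp only [coe_product, Set.mem_prod, coe_filter, Nat.mem_divisors, Set.mem_ofPred_eq,
      coe_range, Set.mem_Iio, mem_coe] at hz ⊢
    have hcop : Nat.Coprime w (q ^ L) :=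
      Nat.Coprime.pow_right _ ((Nat.Prime.coprime_iff_not_dvd hq).2 hz.1.2).symm
    refine ⟨Nat.mul_dvd_mul (pow_dvd_pow q (by omega)) (hcop.dvd_of_dvd_mul_left hz.1.1.1),
      hz.1.1.2⟩
  · rintro ⟨w, i⟩ hz ⟨w', i'⟩ hz' heq
    simp only [coe_product, Set.mem_prod, coe_filter, Nat.mem_divisors, Set.mem_ofPred_eq,
      coe_range, Set.mem_Iio] at hz hz' heq
    have key : ∀ (w w' i i' : ℕ), ¬ q ∣ w → q ^ i * w = q ^ i' * w' → ¬ i < i' := by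
      intro w w' i i' hw he hlt
      apply hw
      obtain ⟨d, rfl⟩ := Nat.exists_eq_add_of_lt hlt
      have : q ^ i * w = q ^ i * (q ^ (d + 1) * w') := by
        rw [he]; ring
      have := Nat.eq_of_mul_eq_mul_left (pow_pos hq.pos i) this
      rw [this, pow_succ']
      exact Dvd.intro _ (by rw [mul_assoc])
    have e1 := key w w' i i' hz.1.2 heq
    have e2 := key w' w i' i hz'.1.2 heq.symm
    have e3 : i = i' := by omega
    subst e3
    have := Nat.eq_of_mul_eq_mul_left (pow_pos hq.pos i) heq
    rw [this]

lemma card_not_mul_dvd {q D : ℕ} (hD : D ≠ 0) :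
    (D.divisors.filter (fun w => ¬ q * w ∣ D)).card ≤
      (D.divisors.filter (fun w => ¬ q ∣ w)).card := by
  refine Finset.card_le_card_of_injOn (fun w => D / w) ?_ ?_
  · intro w hw
    simp only [coe_filter, Nat.mem_divisors, Set.mem_ofPred_eq] at hw ⊢
    refine ⟨⟨Nat.div_dvd_of_dvd hw.1.1, hD⟩, ?_⟩
    rintro ⟨k, hk⟩
    apply hw.2
    obtain ⟨d, hd⟩ := hw.1.1
    have hw0 : 0 < w := by
      rcases Nat.eq_zero_or_pos w with h | h
      · subst h; simp at hd; exact absurd hd hD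
      · exact h
    rw [hd, Nat.mul_div_cancel_left _ hw0] at hk
    rw [hd, hk]
    exact ⟨k, by ring⟩
  · intro w hw w' hw' heq
    simp only [coe_filter, Nat.mem_divisors, Set.mem_ofPred_eq] at hw hw' heq
    have h1 := Nat.div_div_self hw.1.1 hD
    have h2 := Nat.div_div_self hw'.1.1 hD
    rw [← h1, heq, h2]

end SinglePrime2
end RankOneProof

namespace RankOneProof
open Finset

section Combine
open Classical

/-- Uniform probability of a property on a finite type. -/
noncomputable def pr {α : Type*} [Fintype α] (s : α → Prop) : ℝ := (cnt s : ℝ) / Fintype.card α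

lemma pr_nonneg {α : Type*} [Fintype α] (s : α → Prop) : 0 ≤ pr s := by
  unfold pr; positivity

lemma pr_le_one {α : Type*} [Fintype α] (s : α → Prop) : pr s ≤ 1 := by
  unfold pr
  apply div_le_one_of_le₀
  · rw [cnt_eq]; exact_mod_cast Finset.card_le_univ _
  · positivity

lemma pr_mono {α : Type*} [Fintype α] {s t : α → Prop} (h : ∀ x, s x → t x) : pr s ≤ pr t := by
  unfold pr
  have : (cnt s : ℝ) ≤ cnt t := by exact_mod_cast cnt_mono h
  gcongr

lemma pr_or_le {α : Type*} [Fintype α] (s t : α → Prop) :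
    pr (fun x => s x ∨ t x) ≤ pr s + pr t := by
  unfold pr
  rw [← add_div]
  have : (cnt (fun x => s x ∨ t x) : ℝ) ≤ cnt s + cnt t := by exact_mod_cast cnt_or_le s t
  gcongr

lemma pr_equiv {α β : Type*} [Fintype α] [Fintype β] (e : α ≃ β) (s : β → Prop) :
    pr (fun x => s (e x)) = pr s := by
  unfold pr
  rw [cnt_equiv, Fintype.card_congr e]

lemma cnt_fst {α β : Type*} [Fintype α] [Fintype β] (s : α → Prop) :
    cnt (fun z : α × β => s z.1) = cnt s * Fintype.card β := by
  rw [cnt_eq, cnt_eq, ← Finset.card_univ, ← Finset.card_product]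
  congr 1
  ext z; simp

lemma cnt_snd {α β : Type*} [Fintype α] [Fintype β] (s : β → Prop) :
    cnt (fun z : α × β => s z.2) = Fintype.card α * cnt s := by
  rw [cnt_eq, cnt_eq, ← Finset.card_univ, ← Finset.card_product]
  congr 1
  ext z; simp

lemma pr_fst {α β : Type*} [Fintype α] [Fintype β] [Nonempty β] (s : α → Prop) :
    pr (fun z : α × β => s z.1) = pr s := by
  unfold pr
  rw [cnt_fst, Fintype.card_prod]
  push_cast
  have : (Fintype.card β : ℝ) ≠ 0 := by exact_mod_cast Fintype.card_ne_zero
  rw [mul_div_mul_right _ _ this]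

lemma pr_snd {α β : Type*} [Fintype α] [Fintype β] [Nonempty α] (s : β → Prop) :
    pr (fun z : α × β => s z.2) = pr s := by
  unfold pr
  rw [cnt_snd, Fintype.card_prod]
  push_cast
  have : (Fintype.card α : ℝ) ≠ 0 := by exact_mod_cast Fintype.card_ne_zero
  rw [mul_div_mul_left _ _ this]

lemma sum_cnt_eq {α γ : Type*} [Fintype α] [Fintype γ] (F : α → γ) :
    ∑ u, cnt (fun x => F x = u) = Fintype.card α := by
  simp only [cnt_eq]
  rw [← Finset.card_univ (α := α)]
  exact (Finset.card_eq_sum_card_fiberwise (f := F) (t := univ) (by intro x _; simp)).symm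

lemma sum_pr_eq {α γ : Type*} [Fintype α] [Nonempty α] [Fintype γ] (F : α → γ) :
    ∑ u, pr (fun x => F x = u) = 1 := by
  unfold pr
  rw [← Finset.sum_div, ← Nat.cast_sum, sum_cnt_eq, div_self]
  exact_mod_cast Fintype.card_ne_zero

lemma pr_conv {α β : Type*} [Fintype α] [Fintype β] {h : ℕ} [NeZero h]
    (F : α → ZMod h) (G : β → ZMod h) (u : ZMod h) :
    pr (fun z : α × β => F z.1 + G z.2 = u) =
      ∑ v, pr (fun y => G y = v) * pr (fun x => F x = u - v) := by
  have : cnt (fun z : α × β => F z.1 + G z.2 = u) =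
      ∑ v, cnt (fun y => G y = v) * cnt (fun x => F x = u - v) := by
    have h1 : cnt (fun z : α × β => F z.1 + G z.2 = u) = ∑ y, cnt (fun x => F x = u - G y) := by
      simp only [cnt_eq, Finset.card_filter]
      rw [Fintype.sum_prod_type, Finset.sum_comm]
      refine Finset.sum_congr rfl fun y _ => Finset.sum_congr rfl fun x _ => ?_
      simp only [eq_sub_iff_add_eq]
    rw [h1, ← Finset.sum_fiberwise univ G]
    refine Finset.sum_congr rfl fun v _ => ?_
    rw [cnt_eq (fun y => G y = v), ← smul_eq_mul, ← Finset.sum_const]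
    refine Finset.sum_congr rfl fun y hy => ?_
    rw [(mem_filter.1 hy).2]
  unfold pr
  rw [this, Fintype.card_prod]
  push_cast
  rw [Finset.sum_div]
  refine Finset.sum_congr rfl fun v _ => ?_
  rw [div_mul_div_comm, mul_comm (Fintype.card α : ℝ)]

lemma pr_walk {α β : Type*} [Fintype α] [Fintype β] [Nonempty α] [Nonempty β] {h : ℕ} [NeZero h]
    (F : α → ZMod h) (G : β → ZMod h) (δ κ : ℝ)
    (hF : ∀ u, |pr (fun x => F x = u) - 1 / h| ≤ δ)
    (hG : ∀ u, κ / h ≤ pr (fun y => G y = u)) (u : ZMod h) :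
    |pr (fun z : α × β => F z.1 + G z.2 = u) - 1 / h| ≤ (1 - κ) * δ := by
  have hh : (h : ℝ) ≠ 0 := by exact_mod_cast NeZero.ne h
  have hg := sum_pr_eq G
  have hf : ∑ v, pr (fun x => F x = u - v) = 1 := by
    rw [← sum_pr_eq F]
    exact Fintype.sum_equiv (Equiv.subLeft u) _ _ (fun v => by simp)
  have key : pr (fun z : α × β => F z.1 + G z.2 = u) - 1 / h =
      ∑ v, (pr (fun y => G y = v) - κ / h) * (pr (fun x => F x = u - v) - 1 / h) := by
    rw [pr_conv]
    simp only [sub_mul, mul_sub, Finset.sum_sub_distrib, ← Finset.mul_sum, ← Finset.sum_mul]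
    rw [hf, hg]
    simp only [Finset.sum_const, Finset.card_univ, ZMod.card, nsmul_eq_mul]
    field_simp
    ring
  rw [key]
  refine (Finset.abs_sum_le_sum_abs _ _).trans ?_
  calc ∑ v, |(pr (fun y => G y = v) - κ / h) * (pr (fun x => F x = u - v) - 1 / h)|
      ≤ ∑ v, (pr (fun y => G y = v) - κ / h) * δ := by
        refine Finset.sum_le_sum fun v _ => ?_
        rw [abs_mul, abs_of_nonneg (sub_nonneg.2 (hG v))]
        exact mul_le_mul_of_nonneg_left (hF _) (sub_nonneg.2 (hG v))
    _ = (1 - κ) * δ := by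
        rw [← Finset.sum_mul, Finset.sum_sub_distrib, hg]
        simp only [Finset.sum_const, Finset.card_univ, ZMod.card, nsmul_eq_mul]
        rw [mul_div_cancel₀ _ hh]

lemma single (h : ℕ) [NeZero h] (B : Finset ℕ) (hB : ∀ q ∈ B, q.Prime) (L D : ℕ)
    (hD : D = ∏ q ∈ B, q ^ L) (hDh : Nat.Coprime D h) :
    ∃ κ : ℝ, 0 < κ ∧ κ ≤ 1 ∧ ∀ η : ℝ, 0 < η → ∃ p0 : ℕ, ∀ p : ℕ, ∀ _ : NeZero p, p.Prime →
      p0 ≤ p → ∃ (c : ZMod p → ZMod h) (m : ZMod p),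
        pr (fun x => c (x + 1) ≠ c x) ≤ η ∧
        (∀ q ∈ B, pr (fun x => c (q * x) ≠ q * c x) ≤ 4 * κ / (L + 1)) ∧
        (∀ u, (κ / 2) / h ≤ pr (fun x => c (x + m) - c x = u)) := by
  have hh : 0 < h := Nat.pos_of_ne_zero (NeZero.ne h)
  have hD0 : 0 < D := by
    rw [hD]; exact Finset.prod_pos fun q hq => pow_pos (hB q hq).pos _
  set V := D.divisors.card with hV
  have hV0 : 0 < V := Finset.card_pos.2 ⟨D, by simp [hD0.ne']⟩
  have hVD : V ≤ D := Nat.card_divisors_le_self D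
  set M := 4 * (h * h) * ((D + 1) * (D + 1)) with hM
  have hM0 : 0 < M := by positivity
  have hhR : (0 : ℝ) < h := by exact_mod_cast hh
  have hMR : (0 : ℝ) < M := by exact_mod_cast hM0
  have hVR : (0 : ℝ) < V := by exact_mod_cast hV0
  refine ⟨V * h / (2 * M), by positivity, ?_, ?_⟩
  · rw [div_le_one (by positivity)]
    have : V * h ≤ 2 * M := by
      rw [hM]
      have h1 : V * h ≤ D * h := Nat.mul_le_mul_right _ hVD
      have h2 : h ≤ h * h := Nat.le_mul_self h
      have h3 : D * h ≤ (D + 1) * (D + 1) * (h * h) := Nat.mul_le_mul (by nlinarith) h2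
      nlinarith
    exact_mod_cast this
  intro η hη
  refine ⟨M + ⌈(D * (D * (h + 2)) : ℝ) / η⌉₊ + (∑ q ∈ B, q) + D + 1, ?_⟩
  intro p hpne hpp hp
  have hpR : (0 : ℝ) < p := by exact_mod_cast hpp.pos
  set J := p / M with hJdef
  have hJM : J * M ≤ p := Nat.div_mul_le_self p M
  have hJ : 0 < J := Nat.div_pos (by omega) hM0
  have hpJ : p ≤ 2 * (J * M) := by
    have := Nat.lt_div_mul_add (a := p) hM0
    rw [← hJdef] at this
    nlinarith
  have hDp : Nat.Coprime D p := (Nat.coprime_of_lt_prime hD0.ne' (by omega) hpp).symm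
  set a := D * (h * J) with ha
  have hp1 : D * (a + h * J) ≤ p := by
    refine le_trans ?_ hJM
    rw [ha, hM]
    have h2 : h ≤ h * h := Nat.le_mul_self h
    have : D * (D * (h * J) + h * J) = (D * (D + 1)) * (h * J) := by ring
    rw [this]
    have h3 : (D * (D + 1)) * (h * J) ≤ ((D + 1) * (D + 1)) * ((h * h) * J) :=
      Nat.mul_le_mul (Nat.mul_le_mul_right _ (by omega)) (Nat.mul_le_mul_right _ h2)
    nlinarith
  have hp2 : 2 * D.divisors.card * (h * h) * J ≤ p := by
    refine le_trans ?_ hJM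
    rw [hM, ← hV]
    have h3 : V ≤ (D + 1) * (D + 1) := by nlinarith
    have : V * (h * h * J) ≤ (D + 1) * (D + 1) * (h * h * J) := Nat.mul_le_mul_right _ h3
    nlinarith
  have ha0 : 0 < a := by positivity
  obtain ⟨m, hm⟩ := exists_mix hJ ha hp1 hDp hDh hD0 hp2
  refine ⟨cc p h a J D, m, ?_, ?_, ?_⟩
  · have h1 := card_cc_succ (p := p) (h := h) (a := a) hJ ha0 hDp
    unfold pr
    rw [ZMod.card, div_le_iff₀ hpR]
    have h2 : (D * (D * (h + 2)) : ℝ) / η ≤ p := by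
      refine (Nat.le_ceil _).trans ?_
      exact_mod_cast (by omega : ⌈(D * (D * (h + 2)) : ℝ) / η⌉₊ ≤ p)
    rw [div_le_iff₀ hη] at h2
    calc _ ≤ ((D * (D * (h + 2)) : ℕ) : ℝ) := by exact_mod_cast h1
      _ ≤ p * η := by push_cast; exact h2
      _ = _ := mul_comm _ _
  · intro q hq
    have hqp : Nat.Coprime q p := by
      refine (Nat.coprime_of_lt_prime (hB q hq).pos.ne' ?_ hpp).symm
      have := Finset.single_le_sum (f := fun q : ℕ => q) (fun _ _ => Nat.zero_le _) hq
      omega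
    have h1 := card_cc_mul (p := p) (h := h) (a := a) (J := J) hD0.ne' hDp (hB q hq).pos hqp
    have hDq : D = q ^ L * ∏ q ∈ B.erase q, q ^ L := by
      rw [hD]; exact (Finset.mul_prod_erase B (fun q => q ^ L) hq).symm
    have h2 := card_not_dvd (L := L) (D' := ∏ q ∈ B.erase q, q ^ L) (hB q hq)
    rw [← hDq] at h2
    have h3 := card_not_mul_dvd (q := q) hD0.ne'
    set V1 := (D.divisors.filter (fun w => ¬ q * w ∣ D)).card
    set V2 := (D.divisors.filter (fun w => ¬ q ∣ w)).card
    unfold pr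
    rw [ZMod.card, div_le_iff₀ hpR]
    have h1R : (cnt (fun x => cc p h a J D (q * x) ≠ q * cc p h a J D x) : ℝ)
        ≤ (V1 + V2) * (h * J) := by exact_mod_cast h1
    have h2R : ((L : ℝ) + 1) * V2 ≤ V := by exact_mod_cast h2
    have h3R : (V1 : ℝ) ≤ V2 := by exact_mod_cast h3
    have hJR : (J : ℝ) * M ≤ p := by exact_mod_cast hJM
    have hL : (0 : ℝ) < L + 1 := by positivity
    refine h1R.trans ?_
    have e1 : (V2 : ℝ) ≤ V / (L + 1) := by
      rw [le_div_iff₀ hL]; linarith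
    have e2 : (J : ℝ) ≤ p / M := by rw [le_div_iff₀ hMR]; exact hJR
    calc ((V1 : ℝ) + V2) * (h * J) ≤ (V / (L + 1) + V / (L + 1)) * (h * (p / M)) := by
          gcongr
          exact h3R.trans e1
      _ = _ := by field_simp; ring
  · intro u
    have h1 := hm u
    unfold pr
    rw [ZMod.card, le_div_iff₀ hpR]
    have h1R : (V : ℝ) * J ≤ 2 * cnt (fun x => cc p h a J D (x + m) - cc p h a J D x = u) := by
      exact_mod_cast h1
    have h2R : (p : ℝ) ≤ 2 * (J * M) := by exact_mod_cast hpJ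
    have : V * h / (2 * M) / 2 / h * p = (V : ℝ) * p / (4 * M) := by field_simp; ring
    rw [this, div_le_iff₀ (by positivity)]
    nlinarith

end Combine
end RankOneProof

namespace RankOneProof
open Finset

section Step
open Classical

lemma combine (P Q : Set ℕ) (hP : ∀ p ∈ P, p.Prime) (hQ : ∀ q ∈ Q, q.Prime)
    (hPQ : Disjoint P Q) (hPinf : P.Infinite)
    (h : ℕ) [NeZero h] (B : Finset ℕ) (κ η τ : ℝ) (hκ1 : κ ≤ 1)
    (p0 : ℕ)
    (hp0 : ∀ p : ℕ, ∀ _ : NeZero p, p.Prime →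
      p0 ≤ p → ∃ (c : ZMod p → ZMod h) (m : ZMod p),
        pr (fun x => c (x + 1) ≠ c x) ≤ η ∧
        (∀ q ∈ B, pr (fun x => c (q * x) ≠ q * c x) ≤ τ) ∧
        (∀ u, (κ / 2) / h ≤ pr (fun x => c (x + m) - c x = u))) (n : ℕ) :
    ∃ H : ℕ, ∃ _ : NeZero H, n + 1 ≤ H ∧ Nat.Coprime h H ∧ (∀ q ∈ Q, Nat.Coprime q H) ∧
      ∃ (C : ZMod H → ZMod h) (m : ZMod H),
        pr (fun x => C (x + 1) ≠ C x) ≤ n * η ∧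
        (∀ q ∈ B, pr (fun x => C (q * x) ≠ q * C x) ≤ n * τ) ∧
        (∀ u, |pr (fun x => C (x + m) - C x = u) - 1 / h| ≤ (1 - κ / 2) ^ n) := by
  induction n with
  | zero =>
    refine ⟨1, inferInstance, le_rfl, Nat.coprime_one_right _, fun q _ => Nat.coprime_one_right _,
      fun _ => 0, 0, ?_, ?_, ?_⟩
    · simp [pr, cnt]
    · simp [pr, cnt]
    · intro u
      have h3 : (0 : ℝ) ≤ 1 / h := by positivity
      have h4 : (1 : ℝ) / h ≤ 1 := by
        have : (1 : ℝ) ≤ h := by exact_mod_cast Nat.one_le_iff_ne_zero.2 (NeZero.ne h)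
        rw [div_le_one (by linarith)]; exact this
      have key : ∀ t : ℝ, 0 ≤ t → t ≤ 1 → |t - 1 / h| ≤ 1 := by
        intro t ht0 ht1
        rw [abs_le]
        constructor <;> linarith
      rw [pow_zero]
      exact key _ (pr_nonneg _) (pr_le_one _)
  | succ n ih =>
    obtain ⟨H, hHne, hH1, hHh, hHQ, C, m, hC1, hC2, hC3⟩ := ih
    obtain ⟨p, hpP, hpbig⟩ := hPinf.exists_gt (p0 + h + H)
    have hpp := hP p hpP
    have hpne : NeZero p := ⟨hpp.ne_zero⟩
    obtain ⟨c, m', hc1, hc2, hc3⟩ := hp0 p hpne hpp (by omega)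
    have hcopH : Nat.Coprime H p :=
      (Nat.coprime_of_lt_prime (NeZero.ne H) (by omega) hpp).symm
    have hcoph : Nat.Coprime h p :=
      (Nat.coprime_of_lt_prime (NeZero.ne h) (by omega) hpp).symm
    let e := ZMod.chineseRemainder hcopH
    have hne : NeZero (H * p) := ⟨Nat.mul_ne_zero (NeZero.ne H) (NeZero.ne p)⟩
    refine ⟨H * p, hne, ?_, Nat.Coprime.mul_right hHh hcoph, ?_, fun x => C (e x).1 + c (e x).2,
      e.symm (m, m'), ?_, ?_, ?_⟩
    · have := hpp.two_le
      nlinarith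
    · intro q hq
      refine Nat.Coprime.mul_right (hHQ q hq) ?_
      refine (Nat.coprime_primes (hQ q hq) hpp).2 ?_
      rintro rfl
      exact Set.disjoint_left.1 hPQ hpP hq
    · have h1 : pr (fun x : ZMod (H * p) => C (e (x + 1)).1 + c (e (x + 1)).2 ≠
          C (e x).1 + c (e x).2) ≤ pr (fun x : ZMod (H * p) => (C ((e x).1 + 1) ≠ C (e x).1) ∨
            (c ((e x).2 + 1) ≠ c (e x).2)) := by
        apply pr_mono
        intro x hx
        by_contra hcon
        push Not at hcon
        apply hx
        rw [map_add, map_one, Prod.fst_add, Prod.snd_add, Prod.fst_one, Prod.snd_one,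
          hcon.1, hcon.2]
      refine h1.trans ?_
      have h2 := pr_equiv e.toEquiv (fun z : ZMod H × ZMod p => (C (z.1 + 1) ≠ C z.1) ∨
            (c (z.2 + 1) ≠ c z.2))
      refine le_trans (le_of_eq h2) ((pr_or_le _ _).trans ?_)
      rw [pr_fst (fun z : ZMod H => C (z + 1) ≠ C z), pr_snd (fun z : ZMod p => c (z + 1) ≠ c z)]
      push_cast
      linarith
    · intro q hq
      have h1 : pr (fun x : ZMod (H * p) => C (e (q * x)).1 + c (e (q * x)).2 ≠
          q * (C (e x).1 + c (e x).2)) ≤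
          pr (fun x : ZMod (H * p) => (C (q * (e x).1) ≠ q * C (e x).1) ∨
            (c (q * (e x).2) ≠ q * c (e x).2)) := by
        apply pr_mono
        intro x hx
        by_contra hcon
        push Not at hcon
        apply hx
        rw [map_mul, map_natCast, Prod.fst_mul, Prod.snd_mul, Prod.fst_natCast, Prod.snd_natCast,
          hcon.1, hcon.2, mul_add]
      refine h1.trans ?_
      have h2 := pr_equiv e.toEquiv (fun z : ZMod H × ZMod p => (C (q * z.1) ≠ q * C z.1) ∨
            (c (q * z.2) ≠ q * c z.2))
      refine le_trans (le_of_eq h2) ((pr_or_le _ _).trans ?_)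
      rw [pr_fst (fun z : ZMod H => C (q * z) ≠ q * C z),
        pr_snd (fun z : ZMod p => c (q * z) ≠ q * c z)]
      have := hC2 q hq
      have := hc2 q hq
      push_cast
      linarith
    · intro u
      have h2 := pr_equiv e.toEquiv (fun z : ZMod H × ZMod p =>
        (C (z.1 + m) - C z.1) + (c (z.2 + m') - c z.2) = u)
      have h3 := pr_walk (fun z : ZMod H => C (z + m) - C z) (fun z : ZMod p => c (z + m') - c z)
        _ _ hC3 hc3 u
      rw [← h2] at h3
      rw [pow_succ']
      convert h3 using 5 with x
      change C (e (x + e.symm (m, m'))).1 + c (e (x + e.symm (m, m'))).2 -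
        (C (e x).1 + c (e x).2) = u ↔ _
      rw [map_add, RingEquiv.apply_symm_apply, Prod.fst_add, Prod.snd_add]
      simp only [RingEquiv.toEquiv_eq_coe, EquivLike.coe_coe]
      rw [add_sub_add_comm]

/-- The basic inductive step of the construction. -/
lemma step (P Q : Set ℕ) (hP : ∀ p ∈ P, p.Prime) (hQ : ∀ q ∈ Q, q.Prime)
    (hPQ : Disjoint P Q) (hPinf : P.Infinite)
    (h : ℕ) [NeZero h] (hh : ∀ q ∈ Q, Nat.Coprime q h) (k : ℕ) (ε : ℝ) (hε : 0 < ε) :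
    ∃ (h' N : ℕ) (_ : NeZero h') (e : ZMod h' ≃ ZMod h × Fin N) (m : ℕ),
      2 ≤ N ∧ h' = h * N ∧ m < h' ∧ (∀ q ∈ Q, Nat.Coprime q h') ∧
      pr (fun x => (e (x + 1)).1 ≠ (e x).1 + 1) ≤ ε ∧
      (∀ q ∈ Q, q ≤ k → pr (fun x => (e (q * x)).1 ≠ q * (e x).1) ≤ ε) ∧
      (∀ a b, |pr (fun x => (e x).1 = a ∧ (e (x + m)).1 = b) - 1 / (h : ℝ) ^ 2| ≤ ε) := by
  let B : Finset ℕ := (Finset.range (k + 1)).filter (fun q => q ∈ Q)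
  have hBQ : ∀ q ∈ B, q ∈ Q := fun q hq => (mem_filter.1 hq).2
  obtain ⟨L, hL⟩ := exists_nat_gt (4 * (2 / ε + 1) / ε)
  obtain ⟨κ, hκ0, hκ1, hκ⟩ := single h B (fun q hq => hQ q (hBQ q hq)) L _ rfl
    (Nat.Coprime.prod_left fun q hq => Nat.Coprime.pow_left _ (hh q (hBQ q hq)))
  set n := ⌈2 / (ε * κ)⌉₊ with hn
  have hn1 : 2 / (ε * κ) ≤ n := Nat.le_ceil _
  have hn2 : (n : ℝ) < 2 / (ε * κ) + 1 := Nat.ceil_lt_add_one (by positivity)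
  have hn0 : 0 < n := by
    rw [hn, Nat.ceil_pos]; positivity
  obtain ⟨p0, hp0⟩ := hκ (ε / n) (by positivity)
  obtain ⟨H, hHne, hH1, hHh, hHQ, C, m, hC1, hC2, hC3⟩ :=
    combine P Q hP hQ hPQ hPinf h B κ (ε / n) _ hκ1 p0 hp0 n
  have hnκ : n * κ ≤ 2 / ε + 1 := by
    have : (n : ℝ) * κ ≤ (2 / (ε * κ) + 1) * κ := by gcongr
    refine this.trans ?_
    rw [add_mul]
    have : 2 / (ε * κ) * κ = 2 / ε := by field_simp
    rw [this]; linarith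
  have hτ : n * (4 * κ / (L + 1)) ≤ ε := by
    have hLp : (0 : ℝ) < L + 1 := by positivity
    have : n * (4 * κ / (L + 1)) = 4 * (n * κ) / (L + 1) := by ring
    rw [this, div_le_iff₀ hLp]
    rw [div_lt_iff₀ hε] at hL
    nlinarith
  have hη : n * (ε / n) ≤ ε := by
    have : (n : ℝ) ≠ 0 := by exact_mod_cast hn0.ne'
    rw [mul_div_cancel₀ _ this]
  have hpow : (1 - κ / 2) ^ n ≤ ε := by
    have h1 : 1 + n * (κ / 2) ≤ (1 + κ / 2) ^ n := one_add_mul_le_pow (by linarith) n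
    have h2 : (1 - κ / 2) ^ n * (1 + κ / 2) ^ n ≤ 1 := by
      rw [← mul_pow]
      apply pow_le_one₀ <;> nlinarith
    have h3 : 0 ≤ (1 - κ / 2) ^ n := pow_nonneg (by linarith) n
    have h4 : 1 / ε ≤ n * (κ / 2) := by
      rw [div_le_iff₀ (by positivity)] at hn1 ⊢
      nlinarith
    have h5 : (1 - κ / 2) ^ n * (1 / ε) ≤ 1 := by
      refine le_trans (mul_le_mul_of_nonneg_left ?_ h3) h2
      linarith
    rw [mul_one_div, div_le_one hε] at h5
    exact h5
  let e1 := ZMod.chineseRemainder hHh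
  let sh : ZMod h × ZMod H ≃ ZMod h × ZMod H :=
    { toFun := fun z => (z.1 + C z.2, z.2)
      invFun := fun z => (z.1 - C z.2, z.2)
      left_inv := fun z => by simp
      right_inv := fun z => by simp }
  let e : ZMod (h * H) ≃ ZMod h × Fin H :=
    (e1.toEquiv.trans sh).trans (Equiv.prodCongr (Equiv.refl _) (ZMod.finEquiv H).symm.toEquiv)
  have he : ∀ x, (e x).1 = (e1 x).1 + C (e1 x).2 := fun x => rfl
  have hne : NeZero (h * H) := ⟨Nat.mul_ne_zero (NeZero.ne h) (NeZero.ne H)⟩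
  have hm : ((m.val : ℕ) : ZMod H) = m := ZMod.natCast_zmod_val m
  refine ⟨h * H, H, hne, e, m.val, by omega, rfl, ?_, ?_, ?_, ?_, ?_⟩
  · have := ZMod.val_lt m
    have h0 : 0 < h := Nat.pos_of_ne_zero (NeZero.ne h)
    nlinarith
  · intro q hq
    exact Nat.Coprime.mul_right (hh q hq) (hHQ q hq)
  · have h1 : pr (fun x => (e (x + 1)).1 ≠ (e x).1 + 1) ≤
        pr (fun x : ZMod (h * H) => C ((e1 x).2 + 1) ≠ C (e1 x).2) := by
      apply pr_mono
      intro x hx hcon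
      apply hx
      rw [he, he, map_add, map_one, Prod.fst_add, Prod.snd_add, Prod.fst_one, Prod.snd_one, hcon]
      ring
    have h2 := pr_equiv e1.toEquiv (fun z : ZMod h × ZMod H => C (z.2 + 1) ≠ C z.2)
    have h3 := pr_snd (α := ZMod h) (fun z : ZMod H => C (z + 1) ≠ C z)
    exact h1.trans ((le_of_eq (h2.trans h3)).trans (hC1.trans hη))
  · intro q hq hqk
    have hqB : q ∈ B := by
      simp only [B, mem_filter, mem_range]
      exact ⟨by omega, hq⟩
    have h1 : pr (fun x => (e (q * x)).1 ≠ q * (e x).1) ≤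
        pr (fun x : ZMod (h * H) => C (q * (e1 x).2) ≠ q * C (e1 x).2) := by
      apply pr_mono
      intro x hx hcon
      apply hx
      rw [he, he, map_mul, map_natCast, Prod.fst_mul, Prod.snd_mul, Prod.fst_natCast,
        Prod.snd_natCast, hcon]
      ring
    have h2 := pr_equiv e1.toEquiv (fun z : ZMod h × ZMod H => C (q * z.2) ≠ q * C z.2)
    have h3 := pr_snd (α := ZMod h) (fun z : ZMod H => C (q * z) ≠ q * C z)
    exact h1.trans ((le_of_eq (h2.trans h3)).trans ((hC2 q hqB).trans hτ))
  · intro a b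
    have h2 := pr_equiv e1.toEquiv (fun z : ZMod h × ZMod H => z.1 + C z.2 = a ∧
      (z.1 + (m.val : ZMod h)) + C (z.2 + m) = b)
    have h3 : pr (fun x => (e x).1 = a ∧ (e (x + (m.val : ℕ))).1 = b) =
        pr (fun z : ZMod h × ZMod H => z.1 + C z.2 = a ∧
      (z.1 + (m.val : ZMod h)) + C (z.2 + m) = b) := by
      rw [← h2]
      congr 1
      ext x
      rw [he, he, map_add, map_natCast, Prod.fst_add, Prod.snd_add, Prod.fst_natCast,
        Prod.snd_natCast, hm]
      rfl
    have h4 : cnt (fun z : ZMod h × ZMod H => z.1 + C z.2 = a ∧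
      (z.1 + (m.val : ZMod h)) + C (z.2 + m) = b) =
        cnt (fun y => C (y + m) - C y = b - a - (m.val : ZMod h)) := by
      rw [cnt_eq, cnt_eq]
      refine Finset.card_nbij' (fun z => z.2) (fun y => (a - C y, y)) ?_ ?_ ?_ ?_
      · intro z hz
        simp only [coe_filter, mem_univ, true_and, Set.mem_ofPred_eq] at hz ⊢
        rw [← hz.1, ← hz.2]; ring
      · intro y hy
        simp only [coe_filter, mem_univ, true_and, Set.mem_ofPred_eq] at hy ⊢
        refine ⟨by ring, ?_⟩
        have : C (y + m) = C y + (b - a - (m.val : ZMod h)) := by rw [← hy]; ring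
        rw [this]; ring
      · intro z hz
        simp only [coe_filter, mem_univ, true_and, Set.mem_ofPred_eq] at hz ⊢
        rw [← hz.1]; ext <;> simp
      · intro y hy
        rfl
    have hhR : (1 : ℝ) ≤ h := by exact_mod_cast Nat.one_le_iff_ne_zero.2 (NeZero.ne h)
    have h5 := hC3 (b - a - (m.val : ZMod h))
    rw [h3]
    have h6 : pr (fun z : ZMod h × ZMod H => z.1 + C z.2 = a ∧
      (z.1 + (m.val : ZMod h)) + C (z.2 + m) = b) - 1 / (h : ℝ) ^ 2 =
      (1 / h) * (pr (fun y => C (y + m) - C y = b - a - (m.val : ZMod h)) - 1 / h) := by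
      unfold pr
      rw [h4, Fintype.card_prod, ZMod.card, ZMod.card]
      have : (H : ℝ) ≠ 0 := by exact_mod_cast NeZero.ne H
      have : (h : ℝ) ≠ 0 := by exact_mod_cast NeZero.ne h
      push_cast
      field_simp
    rw [h6, abs_mul, abs_of_nonneg (by positivity)]
    calc 1 / (h : ℝ) * |pr (fun y => C (y + m) - C y = b - a - (m.val : ZMod h)) - 1 / h|
        ≤ 1 * |pr (fun y => C (y + m) - C y = b - a - (m.val : ZMod h)) - 1 / h| := by
          gcongr
          rw [div_le_one (by linarith)]; exact hhR
      _ ≤ ε := by rw [one_mul]; exact h5.trans hpow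

end Step
end RankOneProof

namespace RankOneProof

/-- A tower of finite cyclic groups together with maps from each to the previous one. -/
structure Tower where
  h : ℕ → ℕ
  N : ℕ → ℕ
  ne : ∀ k, NeZero (h k)
  h0 : h 0 = 1
  e : ∀ k, ZMod (h (k + 1)) ≃ ZMod (h k) × Fin (N k)
  hN : ∀ k, 2 ≤ N k
  hs : ∀ k, h (k + 1) = h k * N k

instance (T : Tower) (k : ℕ) : NeZero (T.h k) := T.ne k
instance (T : Tower) (k : ℕ) : NeZero (T.N k) := ⟨by have := T.hN k; omega⟩

section Seq

/-- An admissible height. -/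
structure Ht (Q : Set ℕ) where
  h : ℕ
  ne : NeZero h
  cop : ∀ q ∈ Q, Nat.Coprime q h

/-- Data for one step of the construction. -/
structure StepData (Q : Set ℕ) (k : ℕ) (H : Ht Q) where
  next : Ht Q
  N : ℕ
  e : ZMod next.h ≃ ZMod H.h × Fin N
  m : ℕ
  hN : 2 ≤ N
  hs : next.h = H.h * N
  hm : m < next.h
  h1 : haveI := next.ne
    pr (fun x => (e (x + 1)).1 ≠ (e x).1 + 1) ≤ (1 / 2 : ℝ) ^ (k + 1) / (H.h : ℝ) ^ 2
  h2 : haveI := next.ne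
    ∀ q ∈ Q, q ≤ k → pr (fun x => (e (q * x)).1 ≠ q * (e x).1) ≤
      (1 / 2 : ℝ) ^ (k + 1) / (H.h : ℝ) ^ 2
  h3 : haveI := next.ne
    ∀ a b, |pr (fun x => (e x).1 = a ∧ (e (x + m)).1 = b) - 1 / (H.h : ℝ) ^ 2| ≤
      (1 / 2 : ℝ) ^ (k + 1) / (H.h : ℝ) ^ 2

lemma exists_tower (P Q : Set ℕ) (hP : ∀ p ∈ P, p.Prime) (hQ : ∀ q ∈ Q, q.Prime)
    (hPQ : Disjoint P Q) (hPinf : P.Infinite) :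
    ∃ (T : Tower) (m : ℕ → ℕ),
      (∀ k, m k < T.h (k + 1)) ∧ (∀ k, ∀ q ∈ Q, Nat.Coprime q (T.h k)) ∧
      (∀ k, pr (fun x => (T.e k (x + 1)).1 ≠ (T.e k x).1 + 1) ≤
        (1 / 2 : ℝ) ^ (k + 1) / (T.h k : ℝ) ^ 2) ∧
      (∀ k, ∀ q ∈ Q, q ≤ k → pr (fun x => (T.e k (q * x)).1 ≠ q * (T.e k x).1) ≤
        (1 / 2 : ℝ) ^ (k + 1) / (T.h k : ℝ) ^ 2) ∧
      (∀ k, ∀ a b, |pr (fun x => (T.e k x).1 = a ∧ (T.e k (x + m k)).1 = b)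
        - 1 / (T.h k : ℝ) ^ 2| ≤ (1 / 2 : ℝ) ^ (k + 1) / (T.h k : ℝ) ^ 2) := by
  have hstep : ∀ (k : ℕ) (H : Ht Q), Nonempty (StepData Q k H) := by
    intro k H
    haveI := H.ne
    have hpos : (0 : ℝ) < H.h := by exact_mod_cast Nat.pos_of_ne_zero (NeZero.ne H.h)
    obtain ⟨h', N, hne, e, m, a1, a2, a3, a4, a5, a6, a7⟩ :=
      step P Q hP hQ hPQ hPinf H.h H.cop k ((1 / 2 : ℝ) ^ (k + 1) / (H.h : ℝ) ^ 2) (by positivity)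
    exact ⟨⟨⟨h', hne, a4⟩, N, e, m, a1, a2, a3, a5, a6, a7⟩⟩
  let D : ∀ (k : ℕ) (H : Ht Q), StepData Q k H := fun k H => Classical.choice (hstep k H)
  let F : ℕ → Ht Q := fun k => Nat.rec ⟨1, inferInstance, fun q _ => Nat.coprime_one_right _⟩
    (fun k H => (D k H).next) k
  refine ⟨⟨fun k => (F k).h, fun k => (D k (F k)).N, fun k => (F k).ne, rfl,
    fun k => (D k (F k)).e, fun k => (D k (F k)).hN, fun k => (D k (F k)).hs⟩,
    fun k => (D k (F k)).m, fun k => (D k (F k)).hm, fun k => (F k).cop,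
    fun k => (D k (F k)).h1, fun k => (D k (F k)).h2, fun k => (D k (F k)).h3⟩

end Seq
end RankOneProof

namespace RankOneProof
open MeasureTheory Filter
open scoped ENNReal

namespace Tower

/-- The underlying space. -/
abbrev X (T : Tower) : Type := ∀ k, Fin (T.N k)

/-- The product measure. -/
noncomputable def mu (T : Tower) : Measure T.X :=
  Measure.infinitePi fun k => (PMF.uniformOfFintype (Fin (T.N k))).toMeasure

instance (T : Tower) : IsProbabilityMeasure T.mu := by
  unfold mu; infer_instance

/-- The projection to level `k`. -/
def pj (T : Tower) : ∀ k, T.X → ZMod (T.h k)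
  | 0, _ => 0
  | k + 1, x => (T.e k).symm (pj T k x, x k)

variable (T : Tower)

lemma e_pj (k : ℕ) (x : T.X) : T.e k (T.pj (k + 1) x) = (T.pj k x, x k) := by
  simp [pj]

lemma pj_eq_iff (k : ℕ) (x y : T.X) : T.pj k x = T.pj k y ↔ ∀ i < k, x i = y i := by
  induction k with
  | zero => simp [pj]
  | succ k ih =>
    rw [← (T.e k).injective.eq_iff, e_pj, e_pj, Prod.mk.injEq, ih]
    constructor
    · rintro ⟨h1, h2⟩ i hi
      rcases Nat.lt_succ_iff_lt_or_eq.1 hi with h | rfl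
      · exact h1 i h
      · exact h2
    · intro h
      exact ⟨fun i hi => h i (by omega), h k (by omega)⟩

lemma extend (K : ℕ) (y0 : T.X) (z : ∀ k, ZMod (T.h k)) (h0 : T.pj K y0 = z K)
    (hz : ∀ k ≥ K, (T.e k (z (k + 1))).1 = z k) : ∃ y, ∀ k ≥ K, T.pj k y = z k := by
  refine ⟨fun i => if i < K then y0 i else (T.e i (z (i + 1))).2, ?_⟩
  intro k hk
  induction k, hk using Nat.le_induction with
  | base =>
    rw [← h0, pj_eq_iff]
    intro i hi
    simp [hi]
  | succ k hk ih =>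
    rw [← (T.e k).injective.eq_iff, e_pj, ih]
    ext1
    · exact (hz k hk).symm
    · simp [not_lt.2 hk]

lemma pj_surj (k : ℕ) : Function.Surjective (T.pj k) := by
  induction k with
  | zero =>
    intro a
    refine ⟨fun _ => 0, ?_⟩
    have : Subsingleton (ZMod (T.h 0)) := by rw [T.h0]; infer_instance
    exact Subsingleton.elim _ _
  | succ k ih =>
    intro a
    obtain ⟨y0, hy0⟩ := ih (T.e k a).1
    refine ⟨Function.update y0 k (T.e k a).2, ?_⟩
    rw [← (T.e k).injective.eq_iff, e_pj]
    ext1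
    · change T.pj k _ = _
      rw [← hy0, pj_eq_iff]
      intro i hi
      rw [Function.update_of_ne (by omega)]
    · simp

lemma pj_complete (K : ℕ) (z : ∀ k, ZMod (T.h k))
    (hz : ∀ k ≥ K, (T.e k (z (k + 1))).1 = z k) : ∃ y, ∀ k ≥ K, T.pj k y = z k := by
  obtain ⟨y0, hy0⟩ := T.pj_surj K (z K)
  exact T.extend K y0 z hy0 hz

lemma pj_mono {x y : T.X} {k l : ℕ} (hkl : k ≤ l) (h : T.pj l x = T.pj l y) :
    T.pj k x = T.pj k y := by
  rw [pj_eq_iff] at *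
  intro i hi
  exact h i (by omega)

lemma pj_ext {x y : T.X} (h : ∃ᶠ k in atTop, T.pj k x = T.pj k y) : x = y := by
  funext i
  obtain ⟨k, hk, hk'⟩ := (frequently_atTop.1 h) (i + 1)
  exact (T.pj_eq_iff k x y).1 hk' i (by omega)

lemma measurable_pj (k : ℕ) : Measurable (T.pj k) := by
  induction k with
  | zero => exact measurable_const
  | succ k ih =>
    have h1 : Measurable (fun x : T.X => (T.pj k x, x k)) := ih.prodMk (measurable_pi_apply k)
    exact (Measurable.of_discrete (f := (T.e k).symm)).comp h1

lemma measurableSet_pj (k : ℕ) (s : ZMod (T.h k) → Prop) : MeasurableSet {x | s (T.pj k x)} :=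
  (T.measurable_pj k) (MeasurableSet.of_discrete (s := {z | s z}))

lemma mu_single (k : ℕ) (a : ZMod (T.h k)) :
    T.mu {x | T.pj k x = a} = ((T.h k : ℕ) : ℝ≥0∞)⁻¹ := by
  obtain ⟨y, rfl⟩ := T.pj_surj k a
  have h1 : {x | T.pj k x = T.pj k y} = Set.pi (Finset.range k : Finset ℕ) (fun i => {y i}) := by
    ext x
    simp [pj_eq_iff, Set.mem_pi]
  have h2 : ∀ k, ∏ i ∈ Finset.range k, (((T.N i : ℕ) : ℝ≥0∞)⁻¹) = ((T.h k : ℕ) : ℝ≥0∞)⁻¹ := by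
    intro k
    induction k with
    | zero => simp [T.h0]
    | succ k ih =>
      rw [Finset.prod_range_succ, ih, T.hs k, Nat.cast_mul, ENNReal.mul_inv] <;> simp
  rw [h1, mu, Measure.infinitePi_pi _ (fun i _ => MeasurableSet.singleton _), ← h2]
  refine Finset.prod_congr rfl fun i _ => ?_
  rw [PMF.toMeasure_apply_singleton _ _ (MeasurableSet.singleton _)]
  simp

lemma real_single (k : ℕ) (a : ZMod (T.h k)) :
    T.mu.real {x | T.pj k x = a} = ((T.h k : ℕ) : ℝ)⁻¹ := by
  rw [Measure.real, mu_single]; simp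

lemma real_pj (k : ℕ) (s : ZMod (T.h k) → Prop) :
    T.mu.real {x | s (T.pj k x)} = pr s := by
  classical
  have h1 : {x | s (T.pj k x)} = ⋃ a ∈ Finset.univ.filter s, {x | T.pj k x = a} := by
    ext x; simp
  rw [h1, measureReal_biUnion_finset]
  · simp only [real_single]
    rw [Finset.sum_const, pr, cnt_eq, ZMod.card]
    simp [div_eq_mul_inv]
  · intro a _ b _ hab
    rw [Function.onFun, Set.disjoint_left]
    intro x hx hx'
    exact hab (hx.symm.trans hx')
  · intro a _
    exact T.measurableSet_pj k (fun z => z = a)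

lemma refine_pj {k l : ℕ} (hkl : k ≤ l) (s : Set (ZMod (T.h k))) :
    ∃ t : Set (ZMod (T.h l)), T.pj k ⁻¹' s = T.pj l ⁻¹' t := by
  refine ⟨T.pj l '' (T.pj k ⁻¹' s), ?_⟩
  ext x
  constructor
  · intro hx
    exact ⟨x, hx, rfl⟩
  · rintro ⟨y, hy, hxy⟩
    rw [Set.mem_preimage] at *
    rwa [← T.pj_mono hkl hxy]

/-- The algebra of cylinder sets. -/
def alg : Set (Set T.X) := {A | ∃ k, ∃ s : Set (ZMod (T.h k)), A = T.pj k ⁻¹' s}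

lemma alg_isSetAlgebra : IsSetAlgebra T.alg where
  empty_mem := ⟨0, ∅, by simp⟩
  compl_mem := by
    rintro _ ⟨k, s, rfl⟩
    exact ⟨k, sᶜ, rfl⟩
  union_mem := by
    rintro _ _ ⟨k, s, rfl⟩ ⟨l, t, rfl⟩
    obtain ⟨s', hs'⟩ := T.refine_pj (le_max_left k l) s
    obtain ⟨t', ht'⟩ := T.refine_pj (le_max_right k l) t
    exact ⟨max k l, s' ∪ t', by rw [hs', ht']; rfl⟩

lemma generate_alg : (inferInstance : MeasurableSpace T.X) = MeasurableSpace.generateFrom T.alg := by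
  apply le_antisymm
  · refine iSup_le fun i => ?_
    rintro _ ⟨s, hs, rfl⟩
    apply MeasurableSpace.measurableSet_generateFrom
    refine ⟨i + 1, {z | (T.e i z).2 ∈ s}, ?_⟩
    ext x
    simp [e_pj]
  · apply MeasurableSpace.generateFrom_le
    rintro _ ⟨k, s, rfl⟩
    exact T.measurableSet_pj k (fun z => z ∈ s)

lemma approx (A : Set T.X) (hA : MeasurableSet A) (ε : ℝ≥0∞) (hε : 0 < ε) :
    ∃ k0, ∀ k ≥ k0, ∃ s : Set (ZMod (T.h k)), T.mu (symmDiff A (T.pj k ⁻¹' s)) < ε := by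
  have hd := Measure.MeasureDense.of_generateFrom_isSetAlgebra_finite T.mu T.alg_isSetAlgebra
    T.generate_alg
  obtain ⟨r, hr0, hr⟩ := ENNReal.lt_iff_exists_nnreal_btwn.1 hε
  obtain ⟨t, ⟨k0, s, rfl⟩, hs⟩ := hd.approx A hA (measure_ne_top _ _) r (by exact_mod_cast hr0)
  refine ⟨k0, fun k hk => ?_⟩
  obtain ⟨s', hs'⟩ := T.refine_pj hk s
  refine ⟨s', ?_⟩
  rw [← hs']
  refine hs.trans_le ?_
  rw [ENNReal.ofReal_coe_nnreal]
  exact hr.le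

lemma two_pow_le (k : ℕ) : 2 ^ k ≤ T.h k := by
  induction k with
  | zero => simp [T.h0]
  | succ k ih =>
    rw [T.hs k, pow_succ]
    exact Nat.mul_le_mul ih (T.hN k)

lemma h_mono {k l : ℕ} (hkl : k ≤ l) : T.h k ≤ T.h l := by
  induction l, hkl using Nat.le_induction with
  | base => exact le_rfl
  | succ l _ ih =>
    rw [T.hs l]
    have := T.hN l
    nlinarith

lemma noAtoms : NoAtoms T.mu := by
  refine ⟨fun x => ?_⟩
  have h1 : ∀ k, T.mu {x} ≤ (2⁻¹ : ℝ≥0∞) ^ k := by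
    intro k
    refine (measure_mono (t := {y | T.pj k y = T.pj k x}) ?_).trans ?_
    · rintro y rfl; rfl
    · rw [mu_single, ← ENNReal.inv_pow]
      apply ENNReal.inv_le_inv.2
      exact_mod_cast T.two_pow_le k
  have h2 : Tendsto (fun k => (2⁻¹ : ℝ≥0∞) ^ k) atTop (nhds 0) :=
    ENNReal.tendsto_pow_atTop_nhds_zero_of_lt_one (by simp)
  exact le_antisymm (ge_of_tendsto' h2 h1) bot_le

end Tower
end RankOneProof

namespace RankOneProof
open MeasureTheory Filter
open scoped ENNReal

namespace Tower
variable (T : Tower)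

/-- Sequences of permutations of the levels. -/
abbrev Sq : Type := ∀ k, Equiv.Perm (ZMod (T.h k))

/-- Defect of compatibility at level `k`. -/
noncomputable def bad (σ : T.Sq) (k : ℕ) : ℝ :=
  pr (fun z => (T.e k (σ (k + 1) z)).1 ≠ σ k (T.e k z).1)

lemma bad_nonneg (σ : T.Sq) (k : ℕ) : 0 ≤ T.bad σ k := pr_nonneg _

lemma bad_one (k : ℕ) : T.bad 1 k = 0 := by
  simp [bad, pr, cnt]

lemma bad_mul (σ τ : T.Sq) (k : ℕ) : T.bad (σ * τ) k ≤ T.bad σ k + T.bad τ k := by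
  have h1 : T.bad (σ * τ) k ≤ pr (fun z => ((T.e k (σ (k + 1) (τ (k + 1) z))).1 ≠
      σ k (T.e k (τ (k + 1) z)).1) ∨ ((T.e k (τ (k + 1) z)).1 ≠ τ k (T.e k z).1)) := by
    apply pr_mono
    intro z hz
    by_contra hcon
    push Not at hcon
    apply hz
    simp only [Pi.mul_apply, Equiv.Perm.mul_apply]
    rw [hcon.1, hcon.2]
  refine h1.trans ((pr_or_le _ _).trans (le_of_eq ?_))
  congr 1
  exact pr_equiv (τ (k + 1)) (fun z => (T.e k (σ (k + 1) z)).1 ≠ σ k (T.e k z).1)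

lemma bad_inv (σ : T.Sq) (k : ℕ) : T.bad σ⁻¹ k = T.bad σ k := by
  unfold bad
  rw [← pr_equiv (σ (k + 1)) (fun z => (T.e k (σ⁻¹ (k + 1) z)).1 ≠ σ⁻¹ k (T.e k z).1)]
  congr 1
  ext z
  have h1 : σ⁻¹ (k + 1) (σ (k + 1) z) = z := by simp
  rw [h1, Pi.inv_apply, not_iff_not, Equiv.Perm.eq_inv_iff_eq, eq_comm]

/-- The group of almost compatible sequences. -/
def gp : Subgroup T.Sq where
  carrier := {σ | Summable (T.bad σ)}
  one_mem' := by
    change Summable (T.bad 1)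
    have : T.bad 1 = 0 := by funext k; exact T.bad_one k
    rw [this]; exact summable_zero
  mul_mem' := by
    intro a b ha hb
    exact Summable.of_nonneg_of_le (T.bad_nonneg _) (T.bad_mul a b) (Summable.add ha hb)
  inv_mem' := by
    intro a ha
    change Summable (T.bad a⁻¹)
    have : T.bad a⁻¹ = T.bad a := by funext k; exact T.bad_inv a k
    rw [this]; exact ha

/-- `y` is the limit image of `x`. -/
def Lim (σ : T.Sq) (x y : T.X) : Prop := ∀ᶠ k in atTop, T.pj k y = σ k (T.pj k x)

variable {T}

lemma Lim.unique {σ : T.Sq} {x y z : T.X} (h1 : T.Lim σ x y) (h2 : T.Lim σ x z) : y = z := by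
  apply T.pj_ext
  refine Eventually.frequently ?_
  filter_upwards [h1, h2] with k a b
  rw [a, b]

lemma Lim.mul {σ τ : T.Sq} {x y z : T.X} (h1 : T.Lim σ x y) (h2 : T.Lim τ y z) :
    T.Lim (τ * σ) x z := by
  filter_upwards [h1, h2] with k a b
  rw [b, a]; rfl

lemma Lim.inv {σ : T.Sq} {x y : T.X} (h1 : T.Lim σ x y) : T.Lim σ⁻¹ y x := by
  filter_upwards [h1] with k a
  rw [a]; simp

variable (T)

lemma exists_lim_iff (σ : T.Sq) (x : T.X) : (∃ y, T.Lim σ x y) ↔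
    ∀ᶠ k in atTop, (T.e k (σ (k + 1) (T.pj (k + 1) x))).1 = σ k (T.pj k x) := by
  constructor
  · rintro ⟨y, hy⟩
    filter_upwards [hy, (tendsto_add_atTop_nat 1).eventually hy] with k a b
    rw [← b, e_pj, a]
  · intro h
    obtain ⟨K, hK⟩ := eventually_atTop.1 h
    obtain ⟨y, hy⟩ := T.pj_complete K (fun k => σ k (T.pj k x)) hK
    exact ⟨y, eventually_atTop.2 ⟨K, hy⟩⟩

lemma meas_ev {p : ℕ → T.X → Prop} (hp : ∀ k, MeasurableSet {x | p k x}) :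
    MeasurableSet {x | ∀ᶠ k in atTop, p k x} := by
  have : {x | ∀ᶠ k in atTop, p k x} = ⋃ K, ⋂ k, ⋂ (_ : K ≤ k), {x | p k x} := by
    ext x
    simp [eventually_atTop]
  rw [this]
  exact MeasurableSet.iUnion fun K => MeasurableSet.iInter fun k => MeasurableSet.iInter fun _ => hp k

/-- The invariant good set. -/
def E (σ : T.Sq) : Set T.X := {x | ∀ n : ℤ, ∃ y, T.Lim (σ ^ n) x y}

lemma E_inv (σ : T.Sq) : T.E σ⁻¹ = T.E σ := by
  ext x
  constructor
  · intro h n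
    have := h (-n)
    rwa [inv_zpow, zpow_neg, inv_inv] at this
  · intro h n
    have := h (-n)
    rwa [zpow_neg, ← inv_zpow] at this

lemma E_lim {σ : T.Sq} {x y : T.X} (hx : x ∈ T.E σ) (h : T.Lim σ x y) : y ∈ T.E σ := by
  intro n
  obtain ⟨z, hz⟩ := hx (n + 1)
  refine ⟨z, ?_⟩
  have := h.inv.mul hz
  rwa [zpow_add_one, mul_inv_cancel_right] at this

lemma measurableSet_E (σ : T.Sq) : MeasurableSet (T.E σ) := by
  have : T.E σ = ⋂ n : ℤ, {x | ∀ᶠ k in atTop, (T.e k ((σ ^ n) (k + 1) (T.pj (k + 1) x))).1 =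
      (σ ^ n) k (T.pj k x)} := by
    ext x
    simp only [E, Set.mem_iInter, Set.mem_ofPred_eq, exists_lim_iff]
  rw [this]
  refine MeasurableSet.iInter fun n => ?_
  refine T.meas_ev fun k => ?_
  have := T.measurableSet_pj (k + 1) (fun z => (T.e k ((σ ^ n) (k + 1) z)).1 =
      (σ ^ n) k (T.e k z).1)
  simpa only [e_pj] using this

/-- Points where compatibility fails at level `k`. -/
def badSet (σ : T.Sq) (k : ℕ) : Set T.X :=
  {x | (T.e k (σ (k + 1) (T.pj (k + 1) x))).1 ≠ σ k (T.pj k x)}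

lemma real_badSet (σ : T.Sq) (k : ℕ) : T.mu.real (T.badSet σ k) = T.bad σ k := by
  have := T.real_pj (k + 1) (fun z => (T.e k (σ (k + 1) z)).1 ≠ σ k (T.e k z).1)
  simp only [e_pj] at this
  exact this

lemma mu_badSet (σ : T.Sq) (k : ℕ) : T.mu (T.badSet σ k) = ENNReal.ofReal (T.bad σ k) := by
  rw [← real_badSet, ofReal_measureReal]

lemma ae_E {σ : T.Sq} (hσ : σ ∈ T.gp) : ∀ᵐ x ∂T.mu, x ∈ T.E σ := by
  change ∀ᵐ x ∂T.mu, ∀ n : ℤ, _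
  rw [ae_all_iff]
  intro n
  have hn : Summable (T.bad (σ ^ n)) := T.gp.zpow_mem hσ n
  have : ∑' k, T.mu (T.badSet (σ ^ n) k) ≠ ∞ := by
    simp only [mu_badSet]
    rw [← ENNReal.ofReal_tsum_of_nonneg (T.bad_nonneg _) hn]
    exact ENNReal.ofReal_ne_top
  filter_upwards [ae_eventually_notMem this] with x hx
  rw [exists_lim_iff]
  filter_upwards [hx] with k hk
  exact not_not.1 hk

open Classical in
/-- The limit map. -/
noncomputable def S (σ : T.Sq) (x : T.X) : T.X :=
  if h : ∃ y, x ∈ T.E σ ∧ T.Lim σ x y then h.choose else x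

variable {T}

lemma S_lim {σ : T.Sq} {x : T.X} (hx : x ∈ T.E σ) : T.Lim σ x (T.S σ x) := by
  have h1 : ∃ y, x ∈ T.E σ ∧ T.Lim σ x y := by
    obtain ⟨y, hy⟩ := hx 1
    rw [zpow_one] at hy
    exact ⟨y, hx, hy⟩
  rw [S, dif_pos h1]
  exact h1.choose_spec.2

lemma S_not {σ : T.Sq} {x : T.X} (hx : x ∉ T.E σ) : T.S σ x = x := by
  rw [S, dif_neg]
  rintro ⟨y, h, _⟩
  exact hx h

lemma S_left_inv (σ : T.Sq) (x : T.X) : T.S σ⁻¹ (T.S σ x) = x := by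
  by_cases hx : x ∈ T.E σ
  · have h1 := S_lim hx
    have h2 : T.S σ x ∈ T.E σ⁻¹ := by
      rw [E_inv]; exact T.E_lim hx h1
    exact (S_lim h2).unique h1.inv
  · rw [S_not hx, S_not]
    rwa [E_inv]

lemma measurable_S (σ : T.Sq) : Measurable (T.S σ) := by
  have hgen : Measurable[_, MeasurableSpace.generateFrom T.alg] (T.S σ) := by
    refine measurable_generateFrom ?_
    rintro _ ⟨k, s, rfl⟩
    have h1 : T.S σ ⁻¹' (T.pj k ⁻¹' s) = (T.E σ ∩ {x | ∀ᶠ l in atTop,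
        σ l (T.pj l x) ∈ T.pj l '' (T.pj k ⁻¹' s)}) ∪ ((T.E σ)ᶜ ∩ T.pj k ⁻¹' s) := by
      ext x
      by_cases hx : x ∈ T.E σ
      · simp only [Set.mem_union, Set.mem_inter_iff, hx, true_and, Set.mem_compl_iff,
          not_true_eq_false, false_and, or_false]
        constructor
        · intro h
          change ∀ᶠ l in atTop, _
          filter_upwards [S_lim hx] with l hl
          exact ⟨_, h, hl⟩
        · intro h
          change ∀ᶠ l in atTop, _ at h
          obtain ⟨l, ⟨h2, h3⟩, h4⟩ := ((h.and (S_lim hx)).and (eventually_ge_atTop k)).exists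
          obtain ⟨y, hy, hyl⟩ := h2
          have h5 := T.pj_mono h4 (hyl.trans h3.symm)
          change T.pj k _ ∈ s
          rw [← h5]; exact hy
      · simp only [Set.mem_union, Set.mem_inter_iff, hx, false_and, Set.mem_compl_iff,
          not_false_eq_true, true_and, false_or, Set.mem_preimage, S_not hx]
    rw [h1]
    refine ((T.measurableSet_E σ).inter ?_).union ((T.measurableSet_E σ).compl.inter
      (T.measurableSet_pj k (fun z => z ∈ s)))
    exact T.meas_ev fun l => T.measurableSet_pj l
      (fun z => σ l z ∈ T.pj l '' (T.pj k ⁻¹' s))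
  rw [← T.generate_alg] at hgen
  exact hgen

/-- The limit automorphism. -/
noncomputable def Se (σ : T.Sq) : T.X ≃ᵐ T.X where
  toFun := T.S σ
  invFun := T.S σ⁻¹
  left_inv := S_left_inv σ
  right_inv := fun x => by
    have := S_left_inv σ⁻¹ x
    rwa [inv_inv] at this
  measurable_toFun := measurable_S σ
  measurable_invFun := measurable_S σ⁻¹

lemma Se_lim {σ : T.Sq} (hσ : σ ∈ T.gp) : ∀ᵐ x ∂T.mu, T.Lim σ x (Se σ x) := by
  filter_upwards [T.ae_E hσ] with x hx
  exact S_lim hx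

lemma err {σ : T.Sq} (hσ : σ ∈ T.gp) (l : ℕ) :
    T.mu.real {x | T.pj l (Se σ x) ≠ σ l (T.pj l x)} ≤ ∑' j, T.bad σ (j + l) := by
  have h0 : ∀ᵐ x ∂T.mu, T.pj l (Se σ x) ≠ σ l (T.pj l x) → x ∈ ⋃ j, T.badSet σ (j + l) := by
    filter_upwards [Se_lim hσ] with x hx hne
    by_contra hcon
    simp only [Set.mem_iUnion, not_exists] at hcon
    obtain ⟨K, hK⟩ := eventually_atTop.1 hx
    have key : ∀ d, T.pj (l + d) (Se σ x) = σ (l + d) (T.pj (l + d) x) →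
        T.pj l (Se σ x) = σ l (T.pj l x) := by
      intro d
      induction d with
      | zero => exact id
      | succ d ih =>
        intro hd
        apply ih
        have h1 : T.pj (l + d) (Se σ x) = (T.e (l + d) (T.pj (l + d + 1) (Se σ x))).1 := by
          rw [e_pj]
        rw [h1]
        have h2 : T.pj (l + d + 1) (Se σ x) = σ (l + d + 1) (T.pj (l + d + 1) x) := hd
        rw [h2]
        have h3 := hcon d
        rw [add_comm d l] at h3
        exact not_not.1 h3
    exact hne (key K (hK _ (by omega)))
  have hsum : Summable (fun j => T.bad σ (j + l)) := (summable_nat_add_iff l).2 hσ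
  have h1 : T.mu {x | T.pj l (Se σ x) ≠ σ l (T.pj l x)} ≤
      ENNReal.ofReal (∑' j, T.bad σ (j + l)) := by
    refine (measure_mono_ae h0).trans ((measure_iUnion_le _).trans ?_)
    simp only [mu_badSet]
    rw [← ENNReal.ofReal_tsum_of_nonneg (fun _ => T.bad_nonneg _ _) hsum]
  refine ENNReal.toReal_le_of_le_ofReal ?_ h1
  exact tsum_nonneg fun _ => T.bad_nonneg _ _

lemma Se_mp {σ : T.Sq} (hσ : σ ∈ T.gp) : MeasurePreserving (Se σ) T.mu T.mu := by
  refine ⟨(Se σ).measurable, ?_⟩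
  have : IsProbabilityMeasure (Measure.map (Se σ) T.mu) :=
    Measure.isProbabilityMeasure_map (Se σ).measurable.aemeasurable
  refine ext_of_generate_finite T.alg T.generate_alg ?_ ?_ (by simp)
  · intro A hA B hB _
    exact T.alg_isSetAlgebra.inter_mem hA hB
  · rintro _ ⟨k, s, rfl⟩
    have hms : MeasurableSet (T.pj k ⁻¹' s) := T.measurableSet_pj k (fun z => z ∈ s)
    rw [Measure.map_apply (Se σ).measurable hms]
    rw [← measureReal_eq_measureReal_iff]
    have hb : ∀ l ≥ k, |T.mu.real (Se σ ⁻¹' (T.pj k ⁻¹' s)) - T.mu.real (T.pj k ⁻¹' s)| ≤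
        ∑' j, T.bad σ (j + l) := by
      intro l hl
      obtain ⟨t, ht⟩ := T.refine_pj hl s
      rw [ht]
      have h1 : T.mu.real (T.pj l ⁻¹' t) = T.mu.real {x | σ l (T.pj l x) ∈ t} := by
        rw [T.real_pj l (fun z => σ l z ∈ t), pr_equiv (σ l) (fun z => z ∈ t)]
        exact T.real_pj l (fun z => z ∈ t)
      rw [h1]
      have h2 := err hσ l
      refine le_trans ?_ h2
      rw [abs_le]
      have hA : Se σ ⁻¹' (T.pj l ⁻¹' t) ⊆ {x | σ l (T.pj l x) ∈ t} ∪
          {x | T.pj l (Se σ x) ≠ σ l (T.pj l x)} := by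
        intro x hx
        by_cases hc : T.pj l (Se σ x) = σ l (T.pj l x)
        · left
          change σ l (T.pj l x) ∈ t
          rw [← hc]; exact hx
        · right; exact hc
      have hB : {x | σ l (T.pj l x) ∈ t} ⊆ Se σ ⁻¹' (T.pj l ⁻¹' t) ∪
          {x | T.pj l (Se σ x) ≠ σ l (T.pj l x)} := by
        intro x hx
        by_cases hc : T.pj l (Se σ x) = σ l (T.pj l x)
        · left
          change T.pj l _ ∈ t
          rw [hc]; exact hx
        · right; exact hc
      have hA' := (measureReal_mono (μ := T.mu) hA).trans (measureReal_union_le _ _)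
      have hB' := (measureReal_mono (μ := T.mu) hB).trans (measureReal_union_le _ _)
      constructor <;> linarith
    have ht : Tendsto (fun l => ∑' j, T.bad σ (j + l)) atTop (nhds 0) := tendsto_sum_nat_add _
    have h0 : |T.mu.real (Se σ ⁻¹' (T.pj k ⁻¹' s)) - T.mu.real (T.pj k ⁻¹' s)| ≤ 0 := by
      refine ge_of_tendsto ht ?_
      filter_upwards [eventually_ge_atTop k] with l hl using hb l hl
    exact sub_eq_zero.1 (abs_nonpos_iff.1 h0)

end Tower
end RankOneProof

namespace RankOneProof
open MeasureTheory Filter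
open scoped ENNReal

section Mixing

lemma closed_tendsto {E : Type*} [SeminormedAddCommGroup E] (φ : ℕ → E → ℝ)
    (hsub : ∀ i f g, φ i (f - g) = φ i f - φ i g) (C : ℝ) (hC : 0 ≤ C)
    (hb : ∀ i f, |φ i f| ≤ C * ‖f‖) :
    IsClosed {f | Tendsto (fun i => φ i f) atTop (nhds 0)} := by
  apply isClosed_of_closure_subset
  intro f hf
  change Tendsto _ _ _
  rw [Metric.tendsto_atTop]
  intro ε hε
  obtain ⟨g, hg, hfg⟩ := Metric.mem_closure_iff.1 hf (ε / (2 * (C + 1))) (by positivity)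
  change Tendsto _ _ _ at hg
  obtain ⟨N, hN⟩ := (Metric.tendsto_atTop.1 hg) (ε / 2) (by positivity)
  refine ⟨N, fun n hn => ?_⟩
  have h1 := hN n hn
  rw [Real.dist_eq, sub_zero] at h1 ⊢
  have h2 : φ n f = φ n g + φ n (f - g) := by rw [hsub]; ring
  have h3 := hb n (f - g)
  rw [dist_eq_norm, lt_div_iff₀ (by positivity)] at hfg
  have h4 : C * ‖f - g‖ ≤ ε / 2 := by nlinarith [norm_nonneg (f - g)]
  rw [h2]
  have := abs_add_le (φ n g) (φ n (f - g))
  linarith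

lemma mixing_of_sets {X : Type*} [MeasurableSpace X] (μ : Measure X) [IsProbabilityMeasure μ]
    (S : ℕ → X → X) (hS : ∀ i, MeasurePreserving (S i) μ μ)
    (hmix : ∀ A B : Set X, MeasurableSet A → MeasurableSet B →
      Tendsto (fun i => μ.real (A ∩ S i ⁻¹' B) - μ.real A * μ.real B) atTop (nhds 0))
    (f g : Lp ℝ 2 μ) :
    Tendsto (fun i => ∫ x, f x * g (S i x) ∂μ) atTop (nhds ((∫ x, f x ∂μ) * ∫ x, g x ∂μ)) := by
  let V : ℕ → Lp ℝ 2 μ →+ Lp ℝ 2 μ := fun i => Lp.compMeasurePreserving (S i) (hS i)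
  let o : Lp ℝ 2 μ := indicatorConstLp 2 MeasurableSet.univ (measure_ne_top μ _) (1 : ℝ)
  let φ : ℕ → Lp ℝ 2 μ → Lp ℝ 2 μ → ℝ := fun i f g =>
    inner ℝ f (V i g) - inner ℝ o f * inner ℝ o g
  have hV : ∀ i g, ‖V i g‖ = ‖g‖ := fun i g => Lp.norm_compMeasurePreserving g (hS i)
  have hφ : ∀ i f g, |φ i f g| ≤ (1 + ‖o‖ * ‖o‖) * ‖f‖ * ‖g‖ := by
    intro i f g
    have h1 := abs_real_inner_le_norm f (V i g)
    rw [hV] at h1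
    have h2 := abs_real_inner_le_norm o f
    have h3 := abs_real_inner_le_norm o g
    have h4 : |inner ℝ o f * inner ℝ o g| ≤ (‖o‖ * ‖f‖) * (‖o‖ * ‖g‖) := by
      rw [abs_mul]; gcongr
    have h5 := abs_sub (inner ℝ f (V i g)) (inner ℝ o f * inner ℝ o g)
    calc |φ i f g| ≤ _ := h5
      _ ≤ ‖f‖ * ‖g‖ + (‖o‖ * ‖f‖) * (‖o‖ * ‖g‖) := add_le_add h1 h4
      _ = _ := by ring
  have hind : ∀ (A B : Set X) (hA : MeasurableSet A) (hB : MeasurableSet B) (c d : ℝ),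
      Tendsto (fun i => φ i (indicatorConstLp 2 hA (measure_ne_top μ _) c)
        (indicatorConstLp 2 hB (measure_ne_top μ _) d)) atTop (nhds 0) := by
    intro A B hA hB c d
    have h1 : ∀ i, φ i (indicatorConstLp 2 hA (measure_ne_top μ _) c)
        (indicatorConstLp 2 hB (measure_ne_top μ _) d) =
        (c * d) * (μ.real (A ∩ S i ⁻¹' B) - μ.real A * μ.real B) := by
      intro i
      simp only [φ, V, o]
      rw [Lp.indicatorConstLp_compMeasurePreserving, L2.inner_indicatorConstLp_indicatorConstLp,
        L2.inner_indicatorConstLp_indicatorConstLp, L2.inner_indicatorConstLp_indicatorConstLp]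
      simp
      ring
    simp only [h1]
    have := (hmix A B hA hB).const_mul (c * d)
    simpa using this
  have hstep1 : ∀ (B : Set X) (hB : MeasurableSet B) (d : ℝ) (f : Lp ℝ 2 μ),
      Tendsto (fun i => φ i f (indicatorConstLp 2 hB (measure_ne_top μ _) d)) atTop (nhds 0) := by
    intro B hB d f
    refine Lp.induction (by simp) (fun f => Tendsto (fun i => φ i f
      (indicatorConstLp 2 hB (measure_ne_top μ _) d)) atTop (nhds 0)) ?_ ?_ ?_ f
    · intro c s hs hμs
      rw [Lp.simpleFunc.coe_indicatorConst]
      exact hind s B hs hB c d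
    · intro f g hf hg _ h1 h2
      have := h1.add h2
      simp only [add_zero] at this
      refine this.congr fun i => ?_
      simp only [φ, inner_add_left, inner_add_right]
      ring
    · refine closed_tendsto (fun i f => φ i f (indicatorConstLp 2 hB (measure_ne_top μ _) d)) ?_
        ((1 + ‖o‖ * ‖o‖) * ‖indicatorConstLp 2 hB (measure_ne_top μ _) d‖) (by positivity) ?_
      · intro i f g
        simp only [φ, inner_sub_left, inner_sub_right]
        ring
      · intro i f
        refine (hφ i _ _).trans (le_of_eq ?_)
        ring
  have hstep2 : Tendsto (fun i => φ i f g) atTop (nhds 0) := by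
    refine Lp.induction (by simp) (fun g => Tendsto (fun i => φ i f g) atTop (nhds 0)) ?_ ?_ ?_ g
    · intro c s hs hμs
      rw [Lp.simpleFunc.coe_indicatorConst]
      exact hstep1 s hs c f
    · intro g g' hf hg _ h1 h2
      have := h1.add h2
      simp only [add_zero] at this
      refine this.congr fun i => ?_
      simp only [φ, inner_add_right, map_add]
      ring
    · refine closed_tendsto (fun i g => φ i f g) ?_
        ((1 + ‖o‖ * ‖o‖) * ‖f‖) (by positivity) ?_
      · intro i g g'
        simp only [φ, inner_sub_right, map_sub]
        ring
      · intro i g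
        exact hφ i _ _
  have h1 : ∀ f : Lp ℝ 2 μ, inner ℝ o f = ∫ x, f x ∂μ := by
    intro f
    simp only [o]
    rw [L2.inner_indicatorConstLp_one, Measure.restrict_univ]
  have h2 : ∀ i, inner ℝ f (V i g) = ∫ x, f x * g (S i x) ∂μ := by
    intro i
    rw [L2.inner_def]
    refine integral_congr_ae ?_
    filter_upwards [Lp.coeFn_compMeasurePreserving g (hS i)] with x hx
    change inner ℝ (f x) ((Lp.compMeasurePreserving (S i) (hS i) g) x) = _
    rw [hx]
    simp [mul_comm]
  have h3 := hstep2.add_const ((∫ x, f x ∂μ) * ∫ x, g x ∂μ)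
  rw [zero_add] at h3
  refine h3.congr fun i => ?_
  simp only [φ, h1, h2]
  ring

end Mixing
end RankOneProof

namespace RankOneProof
open MeasureTheory Filter
open scoped ENNReal

namespace Tower
variable (T : Tower)

/-- Rotation by one at each level. -/
def rot : T.Sq := fun k => Equiv.addRight (1 : ZMod (T.h k))

lemma rot_apply (k : ℕ) (z : ZMod (T.h k)) : T.rot k z = z + 1 := rfl

lemma rot_pow (n k : ℕ) (z : ZMod (T.h k)) : (T.rot ^ n) k z = z + n := by
  induction n generalizing z with
  | zero => simp
  | succ n ih =>
    rw [pow_succ, Pi.mul_apply, Equiv.Perm.mul_apply, ih, rot_apply]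
    push_cast; ring

/-- Multiplication by `q` at each level. -/
def mulq (q : ℕ) (hq : ∀ k, Nat.Coprime q (T.h k)) : T.Sq :=
  fun k => (ZMod.unitOfCoprime q (hq k)).mulLeft

lemma mulq_apply (q : ℕ) (hq : ∀ k, Nat.Coprime q (T.h k)) (k : ℕ) (z : ZMod (T.h k)) :
    T.mulq q hq k z = q * z := by
  simp [mulq, Units.mulLeft]

lemma one_le_h (k : ℕ) : (1 : ℝ) ≤ T.h k := by
  exact_mod_cast Nat.one_le_iff_ne_zero.2 (NeZero.ne (T.h k))

lemma summable_of_bound (σ : T.Sq) (K : ℕ)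
    (hb : ∀ k ≥ K, T.bad σ k ≤ (1 / 2 : ℝ) ^ (k + 1) / (T.h k : ℝ) ^ 2) : σ ∈ T.gp := by
  change Summable (T.bad σ)
  rw [← summable_nat_add_iff K]
  refine Summable.of_nonneg_of_le (fun _ => T.bad_nonneg _ _)
    (fun j => (hb (j + K) (by omega)).trans ?_) (summable_geometric_two)
  have h1 : (1 : ℝ) ≤ (T.h (j + K) : ℝ) ^ 2 := one_le_pow₀ (T.one_le_h _)
  refine (div_le_self (by positivity) h1).trans ?_
  exact pow_le_pow_of_le_one (by norm_num) (by norm_num) (by omega)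

section Main

variable {T}

lemma rot_mem (hR : ∀ k, T.bad T.rot k ≤ (1 / 2 : ℝ) ^ (k + 1) / (T.h k : ℝ) ^ 2) : T.rot ∈ T.gp := T.summable_of_bound _ 0 fun k _ => hR k

lemma delta_le (hR : ∀ k, T.bad T.rot k ≤ (1 / 2 : ℝ) ^ (k + 1) / (T.h k : ℝ) ^ 2)
    (k : ℕ) : ∑' j, T.bad T.rot (j + k) ≤ (1 / 2 : ℝ) ^ k / (T.h k : ℝ) ^ 2 := by
  have hs : Summable (fun j => T.bad T.rot (j + k)) := (summable_nat_add_iff k).2 (rot_mem hR)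
  have hg := hasSum_geometric_two' ((1 / 2 : ℝ) ^ k / (T.h k : ℝ) ^ 2)
  rw [← hg.tsum_eq]
  refine hs.tsum_le_tsum (fun j => (hR (j + k)).trans ?_) hg.summable
  have h1 : (T.h k : ℝ) ≤ T.h (j + k) := by exact_mod_cast T.h_mono (by omega)
  have h2 := T.one_le_h k
  have h3 : (1 / 2 : ℝ) ^ k / (T.h k : ℝ) ^ 2 / 2 / 2 ^ j = (1 / 2) ^ (j + k + 1) / (T.h k : ℝ) ^ 2 := by
    rw [pow_succ, pow_add, one_div, inv_pow, inv_pow]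
    field_simp
    ring
  rw [h3]
  gcongr

lemma iter_err (hR : ∀ k, T.bad T.rot k ≤ (1 / 2 : ℝ) ^ (k + 1) / (T.h k : ℝ) ^ 2)
    (k n : ℕ) :
    T.mu.real {x | ∃ i ≤ n, T.pj k ((Se T.rot)^[i] x) ≠ T.pj k x + i} ≤
      n * ((1 / 2 : ℝ) ^ k / (T.h k : ℝ) ^ 2) := by
  have hsub : {x | ∃ i ≤ n, T.pj k ((Se T.rot)^[i] x) ≠ T.pj k x + i} ⊆
      ⋃ j ∈ Finset.range n, (Se T.rot)^[j] ⁻¹' {x | T.pj k (Se T.rot x) ≠ T.rot k (T.pj k x)} := by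
    rintro x ⟨i, hin, hi⟩
    by_contra hcon
    simp only [Set.mem_iUnion, not_exists, Finset.mem_range] at hcon
    apply hi
    have : ∀ i ≤ n, T.pj k ((Se T.rot)^[i] x) = T.pj k x + i := by
      intro i
      induction i with
      | zero => intro _; simp
      | succ i ih =>
        intro hle
        have h1 := not_not.1 (hcon i (by omega))
        rw [Function.iterate_succ_apply', h1, rot_apply, ih (by omega)]
        push_cast; ring
    exact this i hin
  refine (measureReal_mono hsub (measure_ne_top _ _)).trans ((measureReal_biUnion_finset_le _ _).trans ?_)
  have hms : MeasurableSet {x | T.pj k (Se T.rot x) ≠ T.rot k (T.pj k x)} := by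
    refine MeasurableSet.compl ?_
    exact measurableSet_eq_fun ((T.measurable_pj k).comp (Se T.rot).measurable)
      ((Measurable.of_discrete (f := T.rot k)).comp (T.measurable_pj k))
  have h1 : ∀ j ∈ Finset.range n, T.mu.real ((Se T.rot)^[j] ⁻¹'
      {x | T.pj k (Se T.rot x) ≠ T.rot k (T.pj k x)}) ≤ (1 / 2 : ℝ) ^ k / (T.h k : ℝ) ^ 2 := by
    intro j _
    rw [Measure.real, ((Se_mp (rot_mem hR)).iterate j).measure_preimage hms.nullMeasurableSet]
    exact (err (rot_mem hR) k).trans (delta_le hR k)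
  refine (Finset.sum_le_sum h1).trans ?_
  simp

/-- Conjugacy with the powers. -/
lemma conj_pow (hR : ∀ k, T.bad T.rot k ≤ (1 / 2 : ℝ) ^ (k + 1) / (T.h k : ℝ) ^ 2)
    (q : ℕ) (hq : ∀ k, Nat.Coprime q (T.h k)) (hm : T.mulq q hq ∈ T.gp) :
    ∀ᵐ x ∂T.mu, Se (T.mulq q hq) (Se T.rot x) = (Se T.rot)^[q] (Se (T.mulq q hq) x) := by
  have hr := rot_mem hR
  have h1 : ∀ᵐ y ∂T.mu, ∀ n : ℕ, T.Lim (T.rot ^ n) y ((Se T.rot)^[n] y) := by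
    have h2 : ∀ᵐ y ∂T.mu, ∀ n : ℕ, T.Lim T.rot ((Se T.rot)^[n] y) (Se T.rot ((Se T.rot)^[n] y)) := by
      rw [ae_all_iff]
      intro n
      exact ((Se_mp hr).iterate n).quasiMeasurePreserving.ae (Se_lim hr)
    filter_upwards [h2] with y hy n
    induction n with
    | zero =>
      refine Eventually.of_forall fun k => ?_
      simp
    | succ n ih =>
      rw [Function.iterate_succ_apply', pow_succ']
      exact ih.mul (hy n)
  filter_upwards [Se_lim hr, (Se_mp hr).quasiMeasurePreserving.ae (Se_lim hm), Se_lim hm,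
    (Se_mp hm).quasiMeasurePreserving.ae h1] with x a1 a2 a3 a4
  have b1 := a1.mul a2
  have b2 := a3.mul (a4 q)
  have hc : T.mulq q hq * T.rot = T.rot ^ q * T.mulq q hq := by
    funext k
    ext z
    rw [Pi.mul_apply, Pi.mul_apply, Equiv.Perm.mul_apply, Equiv.Perm.mul_apply, rot_pow,
      mulq_apply, mulq_apply, rot_apply, mul_add, mul_one]
  rw [hc] at b1
  exact b1.unique b2

lemma emb_iter (R : T.X ≃ᵐ T.X) (i : ℕ) : MeasurableEmbedding (R^[i]) := by
  induction i with
  | zero => exact MeasurableEmbedding.id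
  | succ i ih => exact ih.comp R.measurableEmbedding

/-- Rank one. -/
lemma rank_one (hR : ∀ k, T.bad T.rot k ≤ (1 / 2 : ℝ) ^ (k + 1) / (T.h k : ℝ) ^ 2)
    (ε : ℝ≥0∞) (hε : 0 < ε) (n : ℕ) (A : Fin n → Set T.X)
    (hA : ∀ j, MeasurableSet (A j)) :
    ∃ (B : Set T.X) (h : ℕ), MeasurableSet B ∧ 1 ≤ h ∧
      (∀ i < h, ∀ j < h, i ≠ j → Disjoint ((Se T.rot)^[i] '' B) ((Se T.rot)^[j] '' B)) ∧
      ∀ j, ∃ s : Finset ℕ, (∀ i ∈ s, i < h) ∧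
        T.mu (symmDiff (A j) (⋃ i ∈ s, (Se T.rot)^[i] '' B)) < ε := by
  classical
  have hε2 : 0 < ε / 2 := ENNReal.half_pos hε.ne'
  choose k0 hk0 using fun j => T.approx (A j) (hA j) (ε / 2) hε2
  have htend : Tendsto (fun k => ENNReal.ofReal ((1 / 2 : ℝ) ^ k)) atTop (nhds 0) := by
    have := ENNReal.tendsto_ofReal
      (tendsto_pow_atTop_nhds_zero_of_lt_one (r := (1 / 2 : ℝ)) (by norm_num) (by norm_num))
    simpa using this
  obtain ⟨k, hk1, hk2⟩ := ((htend.eventually (gt_mem_nhds hε2)).and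
    (eventually_all.2 fun j => eventually_ge_atTop (k0 j))).exists
  set R := Se T.rot with hRdef
  have hmp : MeasurePreserving R T.mu T.mu := Se_mp (rot_mem hR)
  let W : Set T.X := {x | ∃ i ≤ T.h k, T.pj k (R^[i] x) ≠ T.pj k x + i}
  have hW : MeasurableSet W := by
    have : W = ⋃ i, ⋃ (_ : i ≤ T.h k), {x | T.pj k (R^[i] x) ≠ T.pj k x + i} := by
      ext x; simp [W]
    rw [this]
    refine MeasurableSet.iUnion fun i => MeasurableSet.iUnion fun _ => MeasurableSet.compl ?_
    exact measurableSet_eq_fun ((T.measurable_pj k).comp (R.measurable.iterate i))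
      ((Measurable.of_discrete (f := fun z : ZMod (T.h k) => z + i)).comp (T.measurable_pj k))
  let B : Set T.X := {x | T.pj k x = 0} \ W
  have hB : MeasurableSet B := (T.measurableSet_pj k (fun z => z = 0)).diff hW
  have hBi : ∀ i ≤ T.h k, ∀ x ∈ R^[i] '' B, T.pj k x = i := by
    rintro i hi _ ⟨x, ⟨hx0, hxW⟩, rfl⟩
    by_contra hcon
    apply hxW
    refine ⟨i, hi, ?_⟩
    have hx0' : T.pj k x = 0 := hx0
    rw [hx0', zero_add]
    exact hcon
  have hdisj : ∀ i < T.h k, ∀ j < T.h k, i ≠ j → Disjoint (R^[i] '' B) (R^[j] '' B) := by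
    intro i hi j hj hij
    rw [Set.disjoint_left]
    intro x hx hx'
    have h1 := (hBi i hi.le x hx).symm.trans (hBi j hj.le x hx')
    rw [ZMod.natCast_eq_natCast_iff', Nat.mod_eq_of_lt hi, Nat.mod_eq_of_lt hj] at h1
    exact hij h1
  have hmi : ∀ i, MeasurableSet (R^[i] '' B) := fun i => (emb_iter R i).measurableSet_image.2 hB
  have hμi : ∀ i, T.mu.real (R^[i] '' B) = T.mu.real B := by
    intro i
    have h1 := (hmp.iterate i).measure_preimage (hmi i).nullMeasurableSet
    rw [Set.preimage_image_eq _ (emb_iter R i).injective] at h1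
    rw [Measure.real, Measure.real, h1]
  let U : Set T.X := ⋃ i ∈ Finset.range (T.h k), R^[i] '' B
  have hUm : MeasurableSet U := Finset.measurableSet_biUnion _ fun i _ => hmi i
  have hU : T.mu.real U = T.h k * T.mu.real B := by
    simp only [U]
    rw [measureReal_biUnion_finset]
    · simp [hμi]
    · intro i hi j hj hij
      exact hdisj i (by simpa using hi) j (by simpa using hj) hij
    · intro i _; exact hmi i
  have hpos := T.one_le_h k
  have hBl : ((T.h k : ℕ) : ℝ)⁻¹ - T.h k * ((1 / 2 : ℝ) ^ k / (T.h k : ℝ) ^ 2) ≤ T.mu.real B := by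
    have h1 := iter_err hR k (T.h k)
    have h2 : {x | T.pj k x = 0} ⊆ B ∪ W := by
      intro x hx
      by_cases hw : x ∈ W
      · right; exact hw
      · left; exact ⟨hx, hw⟩
    have h3 := (measureReal_mono (μ := T.mu) h2).trans (measureReal_union_le _ _)
    rw [real_single] at h3
    have h4 : T.mu.real W ≤ T.h k * ((1 / 2 : ℝ) ^ k / (T.h k : ℝ) ^ 2) := h1
    linarith
  have hUc : T.mu Uᶜ ≤ ENNReal.ofReal ((1 / 2 : ℝ) ^ k) := by
    rw [← ofReal_measureReal]
    apply ENNReal.ofReal_le_ofReal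
    rw [probReal_compl_eq_one_sub hUm, hU]
    have h1 : 1 - (1 / 2 : ℝ) ^ k ≤ T.h k * T.mu.real B := by
      refine le_trans (le_of_eq ?_) (mul_le_mul_of_nonneg_left hBl (by linarith))
      field_simp
    linarith
  refine ⟨B, T.h k, hB, Nat.one_le_iff_ne_zero.2 (NeZero.ne _), hdisj, ?_⟩
  intro j
  obtain ⟨S, hS⟩ := hk0 j k (hk2 j)
  refine ⟨(Finset.range (T.h k)).filter (fun i => ((i : ℕ) : ZMod (T.h k)) ∈ S), ?_, ?_⟩
  · intro i hi
    exact Finset.mem_range.1 (Finset.mem_filter.1 hi).1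
  · have hsub : symmDiff (A j) (⋃ i ∈ (Finset.range (T.h k)).filter
        (fun i => ((i : ℕ) : ZMod (T.h k)) ∈ S), R^[i] '' B) ⊆
        symmDiff (A j) (T.pj k ⁻¹' S) ∪ Uᶜ := by
      intro x hx
      by_cases hxU : x ∈ U
      · left
        have key : x ∈ (⋃ i ∈ (Finset.range (T.h k)).filter
            (fun i => ((i : ℕ) : ZMod (T.h k)) ∈ S), R^[i] '' B) ↔ x ∈ T.pj k ⁻¹' S := by
          constructor
          · intro h
            obtain ⟨i, hi, hxi⟩ := Set.mem_iUnion₂.1 h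
            obtain ⟨hi1, hi2⟩ := Finset.mem_filter.1 hi
            rw [Set.mem_preimage, hBi i (Finset.mem_range.1 hi1).le x hxi]
            exact hi2
          · intro h
            obtain ⟨i, hi, hxi⟩ := Set.mem_iUnion₂.1 hxU
            refine Set.mem_iUnion₂.2 ⟨i, Finset.mem_filter.2 ⟨hi, ?_⟩, hxi⟩
            rw [Set.mem_preimage, hBi i (Finset.mem_range.1 hi).le x hxi] at h
            exact h
        rw [Set.mem_symmDiff] at hx ⊢
        rwa [key] at hx
      · right; exact hxU
    calc T.mu _ ≤ _ := measure_mono hsub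
      _ ≤ T.mu (symmDiff (A j) (T.pj k ⁻¹' S)) + T.mu Uᶜ := measure_union_le _ _
      _ < ε / 2 + ε / 2 := ENNReal.add_lt_add hS (hUc.trans_lt hk1)
      _ = ε := ENNReal.add_halves ε

lemma pr_sum {α γ : Type*} [Fintype α] [Fintype γ] [DecidableEq γ] (F : α → γ) (S : γ → Prop)
    [DecidablePred S] : pr (fun z => S (F z)) = ∑ c ∈ Finset.univ.filter S, pr (fun z => F z = c) := by
  classical
  unfold pr
  rw [← Finset.sum_div, ← Nat.cast_sum]
  congr 2
  simp only [cnt_eq]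
  rw [Finset.card_eq_sum_card_fiberwise (f := F) (t := Finset.univ.filter S)]
  · refine Finset.sum_congr rfl fun c hc => ?_
    congr 1
    ext z
    simp only [Finset.mem_filter, Finset.mem_univ, true_and]
    constructor
    · exact fun h => h.2
    · intro h
      refine ⟨?_, h⟩
      rw [h]; exact (Finset.mem_filter.1 hc).2
  · intro z hz
    simpa using hz

lemma mix_cyl (hR : ∀ k, T.bad T.rot k ≤ (1 / 2 : ℝ) ^ (k + 1) / (T.h k : ℝ) ^ 2)
    (m : ℕ → ℕ) (hm : ∀ k, m k < T.h (k + 1))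
    (h3 : ∀ k, ∀ a b, |pr (fun x => (T.e k x).1 = a ∧ (T.e k (x + m k)).1 = b)
        - 1 / (T.h k : ℝ) ^ 2| ≤ (1 / 2 : ℝ) ^ (k + 1) / (T.h k : ℝ) ^ 2)
    (k : ℕ) (S S' : Set (ZMod (T.h k))) :
    |T.mu.real (T.pj k ⁻¹' S ∩ (Se T.rot)^[m k] ⁻¹' (T.pj k ⁻¹' S')) -
      T.mu.real (T.pj k ⁻¹' S) * T.mu.real (T.pj k ⁻¹' S')| ≤ (1 / 2 : ℝ) ^ k := by
  classical
  set R := Se T.rot with hRdef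
  let W : Set T.X := {x | ∃ i ≤ m k, T.pj (k + 1) (R^[i] x) ≠ T.pj (k + 1) x + i}
  have hpos := T.one_le_h k
  have hpos1 := T.one_le_h (k + 1)
  have hW : T.mu.real W ≤ (1 / 2 : ℝ) ^ (k + 1) := by
    refine (iter_err hR (k + 1) (m k)).trans ?_
    have h1 : (m k : ℝ) ≤ (T.h (k + 1) : ℝ) ^ 2 := by
      have : (m k : ℝ) ≤ T.h (k + 1) := by exact_mod_cast (hm k).le
      nlinarith
    calc (m k : ℝ) * ((1 / 2 : ℝ) ^ (k + 1) / (T.h (k + 1) : ℝ) ^ 2)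
        ≤ (T.h (k + 1) : ℝ) ^ 2 * ((1 / 2 : ℝ) ^ (k + 1) / (T.h (k + 1) : ℝ) ^ 2) := by gcongr
      _ = _ := by field_simp
  let s : ZMod (T.h (k + 1)) → Prop := fun z => (T.e k z).1 ∈ S ∧ (T.e k (z + m k)).1 ∈ S'
  have hkey : ∀ x, x ∉ W → (x ∈ T.pj k ⁻¹' S ∩ R^[m k] ⁻¹' (T.pj k ⁻¹' S') ↔ s (T.pj (k + 1) x)) := by
    intro x hx
    have h1 : T.pj (k + 1) (R^[m k] x) = T.pj (k + 1) x + m k := by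
      by_contra hcon
      exact hx ⟨m k, le_rfl, hcon⟩
    have h2 : T.pj k (R^[m k] x) = (T.e k (T.pj (k + 1) x + m k)).1 := by
      rw [← h1, e_pj]
    simp only [s, e_pj, Set.mem_inter_iff, Set.mem_preimage, h2]
  have hsub1 : T.pj k ⁻¹' S ∩ R^[m k] ⁻¹' (T.pj k ⁻¹' S') ⊆ {x | s (T.pj (k + 1) x)} ∪ W := by
    intro x hx
    by_cases hw : x ∈ W
    · right; exact hw
    · left; exact (hkey x hw).1 hx
  have hsub2 : {x | s (T.pj (k + 1) x)} ⊆ (T.pj k ⁻¹' S ∩ R^[m k] ⁻¹' (T.pj k ⁻¹' S')) ∪ W := by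
    intro x hx
    by_cases hw : x ∈ W
    · right; exact hw
    · left; exact (hkey x hw).2 hx
  have h1 := (measureReal_mono (μ := T.mu) hsub1).trans (measureReal_union_le _ _)
  have h2 := (measureReal_mono (μ := T.mu) hsub2).trans (measureReal_union_le _ _)
  rw [T.real_pj (k + 1) s] at h1 h2
  have hps : pr s = ∑ c ∈ Finset.univ.filter (fun c : ZMod (T.h k) × ZMod (T.h k) => c.1 ∈ S ∧ c.2 ∈ S'),
      pr (fun z => (T.e k z).1 = c.1 ∧ (T.e k (z + m k)).1 = c.2) := by
    have := pr_sum (fun z => ((T.e k z).1, (T.e k (z + m k)).1))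
      (fun c : ZMod (T.h k) × ZMod (T.h k) => c.1 ∈ S ∧ c.2 ∈ S')
    simp only [Prod.ext_iff] at this
    exact this
  have hcard : (Finset.univ.filter (fun c : ZMod (T.h k) × ZMod (T.h k) => c.1 ∈ S ∧ c.2 ∈ S')) =
      (Finset.univ.filter (· ∈ S)) ×ˢ (Finset.univ.filter (· ∈ S')) := by
    ext c; simp
  have hμ : ∀ S : Set (ZMod (T.h k)), T.mu.real (T.pj k ⁻¹' S) =
      ((Finset.univ.filter (· ∈ S)).card : ℝ) / T.h k := by
    intro S
    have := T.real_pj k (fun z => z ∈ S)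
    rw [pr, cnt_eq, ZMod.card] at this
    exact this
  have hprod : T.mu.real (T.pj k ⁻¹' S) * T.mu.real (T.pj k ⁻¹' S') =
      ∑ c ∈ Finset.univ.filter (fun c : ZMod (T.h k) × ZMod (T.h k) => c.1 ∈ S ∧ c.2 ∈ S'),
        1 / (T.h k : ℝ) ^ 2 := by
    rw [Finset.sum_const, hcard, Finset.card_product, hμ, hμ, nsmul_eq_mul]
    push_cast
    field_simp
  have hdiff : |pr s - T.mu.real (T.pj k ⁻¹' S) * T.mu.real (T.pj k ⁻¹' S')| ≤
      (1 / 2 : ℝ) ^ (k + 1) := by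
    rw [hps, hprod, ← Finset.sum_sub_distrib]
    refine (Finset.abs_sum_le_sum_abs _ _).trans ?_
    refine (Finset.sum_le_sum fun c _ => h3 k c.1 c.2).trans ?_
    rw [Finset.sum_const, nsmul_eq_mul]
    have hc : ((Finset.univ.filter (fun c : ZMod (T.h k) × ZMod (T.h k) =>
        c.1 ∈ S ∧ c.2 ∈ S')).card : ℝ) ≤ (T.h k : ℝ) ^ 2 := by
      have := Finset.card_le_univ (Finset.univ.filter (fun c : ZMod (T.h k) × ZMod (T.h k) =>
        c.1 ∈ S ∧ c.2 ∈ S'))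
      rw [Fintype.card_prod, ZMod.card] at this
      rw [sq]
      exact_mod_cast this
    calc _ ≤ (T.h k : ℝ) ^ 2 * ((1 / 2 : ℝ) ^ (k + 1) / (T.h k : ℝ) ^ 2) := by gcongr
      _ = _ := by field_simp
  have hpow : (1 / 2 : ℝ) ^ k = (1 / 2 : ℝ) ^ (k + 1) + (1 / 2 : ℝ) ^ (k + 1) := by
    rw [pow_succ]; ring
  rw [abs_le] at hdiff ⊢
  rw [hpow]
  constructor <;> linarith [hdiff.1, hdiff.2]

lemma abs_real_sub_le (A A' : Set T.X) :
    |T.mu.real A - T.mu.real A'| ≤ T.mu.real (symmDiff A A') := by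
  have h1 : A ⊆ A' ∪ symmDiff A A' := by
    intro x hx
    by_cases h : x ∈ A'
    · left; exact h
    · right; exact Or.inl ⟨hx, h⟩
  have h2 : A' ⊆ A ∪ symmDiff A A' := by
    intro x hx
    by_cases h : x ∈ A
    · left; exact h
    · right; exact Or.inr ⟨hx, h⟩
  have h1' := (measureReal_mono (μ := T.mu) h1).trans (measureReal_union_le _ _)
  have h2' := (measureReal_mono (μ := T.mu) h2).trans (measureReal_union_le _ _)
  rw [abs_le]
  constructor <;> linarith

lemma mix_sets (hR : ∀ k, T.bad T.rot k ≤ (1 / 2 : ℝ) ^ (k + 1) / (T.h k : ℝ) ^ 2)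
    (m : ℕ → ℕ) (hm : ∀ k, m k < T.h (k + 1))
    (h3 : ∀ k, ∀ a b, |pr (fun x => (T.e k x).1 = a ∧ (T.e k (x + m k)).1 = b)
        - 1 / (T.h k : ℝ) ^ 2| ≤ (1 / 2 : ℝ) ^ (k + 1) / (T.h k : ℝ) ^ 2)
    (A B : Set T.X) (hA : MeasurableSet A) (hB : MeasurableSet B) :
    Tendsto (fun k => T.mu.real (A ∩ (Se T.rot)^[m k] ⁻¹' B) - T.mu.real A * T.mu.real B)
      atTop (nhds 0) := by
  set R := Se T.rot with hRdef
  have hmp : MeasurePreserving R T.mu T.mu := Se_mp (rot_mem hR)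
  rw [Metric.tendsto_atTop]
  intro ε hε
  have hε5 : 0 < ENNReal.ofReal (ε / 5) := by
    rw [ENNReal.ofReal_pos]; positivity
  obtain ⟨kA, hkA⟩ := T.approx A hA _ hε5
  obtain ⟨kB, hkB⟩ := T.approx B hB _ hε5
  obtain ⟨kC, hkC⟩ := exists_pow_lt_of_lt_one (show (0 : ℝ) < ε / 5 by positivity)
    (show (1 / 2 : ℝ) < 1 by norm_num)
  refine ⟨max kA (max kB kC), fun k hk => ?_⟩
  obtain ⟨S, hS⟩ := hkA k (le_trans (le_max_left _ _) hk)
  obtain ⟨S', hS'⟩ := hkB k (le_trans ((le_max_left _ _).trans (le_max_right _ _)) hk)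
  have hkc : kC ≤ k := le_trans ((le_max_right _ _).trans (le_max_right _ _)) hk
  have hpow : (1 / 2 : ℝ) ^ k < ε / 5 :=
    (pow_le_pow_of_le_one (by norm_num) (by norm_num) hkc).trans_lt hkC
  have hSr : T.mu.real (symmDiff A (T.pj k ⁻¹' S)) < ε / 5 :=
    (ENNReal.lt_ofReal_iff_toReal_lt (measure_ne_top _ _)).1 hS
  have hSr' : T.mu.real (symmDiff B (T.pj k ⁻¹' S')) < ε / 5 :=
    (ENNReal.lt_ofReal_iff_toReal_lt (measure_ne_top _ _)).1 hS'
  have hcyl := mix_cyl hR m hm h3 k S S'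
  rw [Real.dist_eq, sub_zero]
  have hmS' : MeasurableSet (T.pj k ⁻¹' S') := T.measurableSet_pj k (fun z => z ∈ S')
  have e1 : |T.mu.real (A ∩ R^[m k] ⁻¹' B) -
      T.mu.real (T.pj k ⁻¹' S ∩ R^[m k] ⁻¹' (T.pj k ⁻¹' S'))| ≤ ε / 5 + ε / 5 := by
    refine (abs_real_sub_le _ _).trans ?_
    have hsub : symmDiff (A ∩ R^[m k] ⁻¹' B) (T.pj k ⁻¹' S ∩ R^[m k] ⁻¹' (T.pj k ⁻¹' S')) ⊆
        symmDiff A (T.pj k ⁻¹' S) ∪ R^[m k] ⁻¹' (symmDiff B (T.pj k ⁻¹' S')) := by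
      intro x
      simp only [Set.mem_symmDiff, Set.mem_inter_iff, Set.mem_union, Set.mem_preimage]
      tauto
    have h1 := (measureReal_mono (μ := T.mu) hsub).trans (measureReal_union_le _ _)
    have h2 : T.mu.real (R^[m k] ⁻¹' (symmDiff B (T.pj k ⁻¹' S'))) =
        T.mu.real (symmDiff B (T.pj k ⁻¹' S')) := by
      rw [Measure.real, Measure.real,
        (hmp.iterate (m k)).measure_preimage (hB.symmDiff hmS').nullMeasurableSet]
    linarith
  have e2 := (abs_real_sub_le A (T.pj k ⁻¹' S)).trans hSr.le
  have e3 := (abs_real_sub_le B (T.pj k ⁻¹' S')).trans hSr'.le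
  have e4 : |T.mu.real A * T.mu.real B - T.mu.real (T.pj k ⁻¹' S) * T.mu.real (T.pj k ⁻¹' S')| ≤
      ε / 5 + ε / 5 := by
    have h1 : T.mu.real A * T.mu.real B - T.mu.real (T.pj k ⁻¹' S) * T.mu.real (T.pj k ⁻¹' S') =
        (T.mu.real A - T.mu.real (T.pj k ⁻¹' S)) * T.mu.real B +
        T.mu.real (T.pj k ⁻¹' S) * (T.mu.real B - T.mu.real (T.pj k ⁻¹' S')) := by ring
    rw [h1]
    refine (abs_add_le _ _).trans ?_
    rw [abs_mul, abs_mul, abs_of_nonneg (measureReal_nonneg (μ := T.mu) (s := B)),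
      abs_of_nonneg (measureReal_nonneg (μ := T.mu) (s := T.pj k ⁻¹' S))]
    have h2 : T.mu.real B ≤ 1 := measureReal_le_one
    have h3 : T.mu.real (T.pj k ⁻¹' S) ≤ 1 := measureReal_le_one
    have h4 := abs_nonneg (T.mu.real A - T.mu.real (T.pj k ⁻¹' S))
    have h5 := abs_nonneg (T.mu.real B - T.mu.real (T.pj k ⁻¹' S'))
    have h6 := measureReal_nonneg (μ := T.mu) (s := B)
    have h7 := measureReal_nonneg (μ := T.mu) (s := T.pj k ⁻¹' S)
    nlinarith
  rw [abs_le] at e1 e4 hcyl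
  rw [abs_lt]
  constructor <;> linarith [e1.1, e1.2, e4.1, e4.2, hcyl.1, hcyl.2]

end Main
end Tower
end RankOneProof


open MeasureTheory Filter
open scoped ENNReal

/-- Theorem 6 of the paper.  Let `P` and `Q` be disjoint sets of
primes with `P` infinite.  Then there is an invertible bimeasurable measure-preserving
transformation `R` of a standard atomless probability space `(X, μ)` such that:
(i) `R` has rank one; (ii) `R` is weakly mixing (there is a mixing sequence `m i` of
integers along which correlations of any `f, g ∈ L²` converge to the product of the
integrals); and (iii) for every `n ∈ Q` there is an invertible bimeasurable
measure-preserving `Ψ` with `Ψ ∘ R = R^[n] ∘ Ψ` a.e., so `R` is conjugate to `R^n`. -/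
theorem exists_rank_one_weakly_mixing_conjugate_to_powers
    (P Q : Set ℕ) (hP : ∀ p ∈ P, p.Prime) (hQ : ∀ q ∈ Q, q.Prime)
    (hPQ : Disjoint P Q) (hPinf : P.Infinite) :
    ∃ (X : Type) (_ : MeasurableSpace X) (μ : Measure X),
      StandardBorelSpace X ∧ IsProbabilityMeasure μ ∧ NoAtoms μ ∧
      ∃ R : X ≃ᵐ X, MeasurePreserving R μ μ ∧
        -- (i) rank one
        (∀ ε : ℝ≥0∞, 0 < ε → ∀ (k : ℕ) (A : Fin k → Set X),
          (∀ j, MeasurableSet (A j)) →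
          ∃ (B : Set X) (h : ℕ), MeasurableSet B ∧ 1 ≤ h ∧
            (∀ i < h, ∀ j < h, i ≠ j → Disjoint ((⇑R)^[i] '' B) ((⇑R)^[j] '' B)) ∧
            ∀ j, ∃ s : Finset ℕ, (∀ i ∈ s, i < h) ∧
              μ (symmDiff (A j) (⋃ i ∈ s, (⇑R)^[i] '' B)) < ε) ∧
        -- (ii) weak mixing via a mixing sequence of integers
        (∃ m : ℕ → ℤ, ∀ f g : Lp ℝ 2 μ,
          Tendsto (fun i => ∫ x, f x * g ((R.toEquiv ^ m i) x) ∂μ) atTop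
            (nhds ((∫ x, f x ∂μ) * ∫ x, g x ∂μ))) ∧
        -- (iii) conjugate to its powers along Q
        (∀ n ∈ Q, ∃ Ψ : X ≃ᵐ X, MeasurePreserving Ψ μ μ ∧
          ∀ᵐ x ∂μ, Ψ (R x) = (⇑R)^[n] (Ψ x)) := by
  obtain ⟨T, m, hm, hcop, h1, h2, h3⟩ :=
    RankOneProof.exists_tower P Q hP hQ hPQ hPinf
  have hR : ∀ k, T.bad T.rot k ≤ (1 / 2 : ℝ) ^ (k + 1) / (T.h k : ℝ) ^ 2 := h1
  have hmp := RankOneProof.Tower.Se_mp (RankOneProof.Tower.rot_mem hR)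
  refine ⟨T.X, inferInstance, T.mu, inferInstance, inferInstance, T.noAtoms,
    RankOneProof.Tower.Se T.rot, hmp, RankOneProof.Tower.rank_one hR,
    ⟨fun i => (m i : ℤ), ?_⟩, ?_⟩
  · intro f g
    have := RankOneProof.mixing_of_sets T.mu (fun i => (RankOneProof.Tower.Se T.rot)^[m i])
      (fun i => hmp.iterate (m i)) (RankOneProof.Tower.mix_sets hR m hm h3) f g
    refine this.congr fun i => ?_
    refine integral_congr_ae (Eventually.of_forall fun x => ?_)
    have hit : (RankOneProof.Tower.Se T.rot)^[m i] x =
        ((RankOneProof.Tower.Se T.rot).toEquiv ^ (m i : ℤ)) x := by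
      rw [zpow_natCast, ← Equiv.Perm.iterate_eq_pow]
      rfl
    simp only [hit]
  · intro q hq
    have hc : ∀ k, Nat.Coprime q (T.h k) := fun k => hcop k q hq
    have hmem : T.mulq q hc ∈ T.gp := by
      refine T.summable_of_bound _ q fun k hk => ?_
      have := h2 k q hq hk
      simpa only [RankOneProof.Tower.bad, RankOneProof.Tower.mulq_apply] using this
    exact ⟨RankOneProof.Tower.Se (T.mulq q hc), RankOneProof.Tower.Se_mp hmem,
      RankOneProof.Tower.conj_pow hR q hc hmem⟩
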